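/- arXiv:1602.00027 — 8 statements merged into one kernel-verified Lean document; each statement's English description precedes it below -/
import Mathlib

section
/- Let V be a finite set and A a symmetric V×V matrix over the two-element field F₂. Then the nondegeneracy set system N(A) = (V; {U ⊆ V : the principal submatrix A_U is invertible over F₂}) is a delta-matroid, i.e., it is a proper set system satisfying the Symmetric Exchange Axiom. (This is Bouchet's theorem; the adjacency matrix of any framed graph is such a matrix A.) -/
open scoped symmDiff

variable {α : Type*} [DecidableEq α]

/-- A (proper) delta-matroid: a nonempty collection `Φ` of subsets of the ground set `E`
satisfying the Symmetric Exchange Axiom. -/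
def IsDeltaMatroid (E : Finset α) (Φ : Set (Finset α)) : Prop :=
  Φ.Nonempty ∧ (∀ φ ∈ Φ, φ ⊆ E) ∧
    ∀ φ₁ ∈ Φ, ∀ φ₂ ∈ Φ, ∀ e ∈ φ₁ ∆ φ₂, ∃ e' ∈ φ₁ ∆ φ₂, φ₁ ∆ ({e, e'} : Finset α) ∈ Φ

/-- The principal submatrix of `A` with rows and columns indexed by `U`. -/
def principalSubmatrix (A : Matrix α α (ZMod 2)) (U : Finset α) :
    Matrix U U (ZMod 2) :=
  A.submatrix (fun i => (i : α)) (fun i => (i : α))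

/-- `U` is nondegenerate for `A`: the principal submatrix `A_U` is invertible over `F₂`
(the empty submatrix has determinant `1`, hence is invertible by convention). -/
def Nondeg (A : Matrix α α (ZMod 2)) (U : Finset α) : Prop :=
  IsUnit (principalSubmatrix A U).det

/-- Twist of a collection of feasible sets by a subset `T`:
`Φ * T = {φ ∆ T : φ ∈ Φ}`. -/
def twist (Φ : Set (Finset α)) (T : Finset α) : Set (Finset α) :=
  {ψ | ∃ φ ∈ Φ, ψ = φ ∆ T}

/-- A binary delta-matroid on ground set `E`: a twist of the nondegeneracy set system of a
symmetric matrix over `F₂` (the matrix is indexed by the ambient type; only its `E × E`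
block is ever used, since only principal submatrices `A_U` with `U ⊆ E` occur). -/
def IsBinaryDeltaMatroid (E : Finset α) (Φ : Set (Finset α)) : Prop :=
  ∃ (A : Matrix α α (ZMod 2)) (T : Finset α), A.IsSymm ∧ T ⊆ E ∧
    Φ = {ψ | ∃ U : Finset α, U ⊆ E ∧ Nondeg A U ∧ ψ = U ∆ T}

/-- Feasible sets of the deletion `D ∖ e`. -/
def delSet (Φ : Set (Finset α)) (e : α) : Set (Finset α) :=
  {φ ∈ Φ | e ∉ φ}

/-- Feasible sets of the contraction `D / e`. -/
def conSet (Φ : Set (Finset α)) (e : α) : Set (Finset α) :=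
  {ψ | ∃ φ ∈ Φ, e ∈ φ ∧ ψ = φ.erase e}

/-- Feasible sets of the handle slide (second Vassiliev move) of `a` over `b`:
`Φ ∆ {φ ∪ {a} : φ ⊆ E ∖ {a, b}, φ ∪ {b} ∈ Φ}`. -/
def slideSet (E : Finset α) (Φ : Set (Finset α)) (a b : α) : Set (Finset α) :=
  Φ ∆ {ψ | ∃ φ : Finset α, φ ⊆ E \ {a, b} ∧ φ ∪ {b} ∈ Φ ∧ ψ = φ ∪ {a}}

/-- Feasible sets of the first Vassiliev move (exchange of handle ends):
`D\'_{ab} = ((D * {b})~_{ab}) * {b}`. -/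
def firstMove (E : Finset α) (Φ : Set (Finset α)) (a b : α) : Set (Finset α) :=
  twist (slideSet E (twist Φ {b}) a b) {b}

/-- Mixed coordinates of the graph of `A`: `(A x) i` for `i ∈ U`, `x i` otherwise. -/
def mixP {V : Type*} [Fintype V] [DecidableEq V] (A : Matrix V V (ZMod 2)) (U : Finset V)
    (x : V → ZMod 2) (i : V) : ZMod 2 :=
  if i ∈ U then (A.mulVec x) i else x i

/-- Complementary mixed coordinates. -/
def mixQ {V : Type*} [Fintype V] [DecidableEq V] (A : Matrix V V (ZMod 2)) (U : Finset V)
    (x : V → ZMod 2) (i : V) : ZMod 2 :=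
  if i ∈ U then x i else (A.mulVec x) i

theorem nondeg_iff_mix {V : Type*} [Fintype V] [DecidableEq V] (A : Matrix V V (ZMod 2))
    (U : Finset V) : Nondeg A U ↔ ∀ x, (∀ i, mixP A U x i = 0) → x = 0 := by
  have key : ∀ x : V → ZMod 2, (∀ i, i ∉ U → x i = 0) → ∀ i : U,
      (principalSubmatrix A U).mulVec (fun j : U => x j) i = A.mulVec x i := by
    intro x hx i
    simp only [Matrix.mulVec, dotProduct, principalSubmatrix, Matrix.submatrix_apply]
    rw [Finset.sum_coe_sort U (fun j => A i j * x j)]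
    apply Finset.sum_subset (Finset.subset_univ _)
    intro j _ hj
    simp [hx j hj]
  unfold Nondeg
  rw [isUnit_iff_ne_zero, ne_eq, ← Matrix.exists_mulVec_eq_zero_iff]
  constructor
  · intro h x hx
    have hx0 : ∀ i, i ∉ U → x i = 0 := fun i hi => by simpa [mixP, hi] using hx i
    by_contra hne
    apply h
    refine ⟨fun j : U => x j, ?_, ?_⟩
    · intro h0
      apply hne
      funext i
      by_cases hi : i ∈ U
      · exact congrFun h0 ⟨i, hi⟩
      · exact hx0 i hi
    · funext i
      rw [key x hx0 i]
      simpa [mixP] using hx i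
  · rintro h ⟨v, hv, hv0⟩
    apply hv
    let x : V → ZMod 2 := fun i => if hi : i ∈ U then v ⟨i, hi⟩ else 0
    have hx0 : ∀ i, i ∉ U → x i = 0 := fun i hi => by simp [x, hi]
    have hxv : (fun j : U => x j) = v := by
      funext j
      simp [x]
    have hx : x = 0 := by
      apply h
      intro i
      by_cases hi : i ∈ U
      · have := key x hx0 ⟨i, hi⟩
        rw [hxv, hv0] at this
        simpa [mixP, hi] using this.symm
      · simp [mixP, hi, hx0 i hi]
    rw [← hxv, hx]
    rfl

theorem mix_isotropic {V : Type*} [Fintype V] [DecidableEq V] (A : Matrix V V (ZMod 2))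
    (hA : A.IsSymm) (U : Finset V) (x w : V → ZMod 2) :
    ∑ j, (mixP A U w j * mixQ A U x j + mixQ A U w j * mixP A U x j) = 0 := by
  have h1 : ∀ j, mixP A U w j * mixQ A U x j + mixQ A U w j * mixP A U x j
      = w j * A.mulVec x j + A.mulVec w j * x j := by
    intro j
    by_cases hj : j ∈ U <;> simp [mixP, mixQ, hj] <;> ring
  simp only [h1, Finset.sum_add_distrib]
  change w ⬝ᵥ A.mulVec x + A.mulVec w ⬝ᵥ x = 0
  rw [Matrix.dotProduct_mulVec, ← Matrix.mulVec_transpose, hA.eq]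
  exact CharTwo.add_self_eq_zero _

theorem mix_surj {V : Type*} [Fintype V] [DecidableEq V] (A : Matrix V V (ZMod 2))
    (U : Finset V) (h : ∀ x, (∀ i, mixP A U x i = 0) → x = 0) (y : V → ZMod 2) :
    ∃ x, ∀ i, mixP A U x i = y i := by
  let L : (V → ZMod 2) →ₗ[ZMod 2] (V → ZMod 2) :=
    { toFun := mixP A U
      map_add' := by
        intro a b
        funext i
        by_cases hi : i ∈ U <;> simp [mixP, hi, Matrix.mulVec_add]
      map_smul' := by
        intro c b
        funext i
        by_cases hi : i ∈ U <;> simp [mixP, hi, Matrix.mulVec_smul] }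
  have hL : Function.Injective L := by
    rw [injective_iff_map_eq_zero]
    intro a ha
    exact h a (fun i => congrFun ha i)
  obtain ⟨x, hx⟩ := (LinearMap.injective_iff_surjective.mp hL) y
  exact ⟨x, fun i => congrFun hx i⟩

theorem mix_symmDiff {V : Type*} [Fintype V] [DecidableEq V] (A : Matrix V V (ZMod 2))
    (U S : Finset V) (x : V → ZMod 2) (i : V) :
    mixP A (U ∆ S) x i = if i ∈ S then mixQ A U x i else mixP A U x i := by
  by_cases h1 : i ∈ U <;> by_cases h2 : i ∈ S <;> simp [mixP, mixQ, Finset.mem_symmDiff, h1, h2]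

/-- If `P w` is supported at `e` and `P x = δ_e`, then `w = 0` or `w = x`. -/
theorem mix_eq {V : Type*} [Fintype V] [DecidableEq V] (A : Matrix V V (ZMod 2))
    (U : Finset V) (h : ∀ x, (∀ i, mixP A U x i = 0) → x = 0) (e : V) (x w : V → ZMod 2)
    (hx : ∀ i, mixP A U x i = if i = e then 1 else 0) (hw : ∀ i, i ≠ e → mixP A U w i = 0) :
    w = 0 ∨ w = x := by
  have two : ∀ a : ZMod 2, a = 0 ∨ a = 1 := by decide
  rcases two (mixP A U w e) with h0 | h1
  · left
    apply h
    intro i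
    by_cases hi : i = e
    · rw [hi, h0]
    · exact hw i hi
  · right
    rw [← sub_eq_zero]
    apply h
    intro i
    have : mixP A U (w - x) i = mixP A U w i - mixP A U x i := by
      by_cases hi : i ∈ U <;> simp [mixP, hi, Matrix.mulVec_sub]
    rw [this, hx]
    by_cases hi : i = e
    · simp [hi, h1]
    · simp [hi, hw i hi]

/-- Bouchet. For a symmetric matrix `A` over `F₂` indexed by a finite
set `V`, the nondegeneracy set system `N(A) = (V; {U ⊆ V : A_U invertible})` is a
(proper) delta-matroid. -/
theorem nondegeneracy_isDeltaMatroid {V : Type*} [Fintype V] [DecidableEq V]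
    (A : Matrix V V (ZMod 2)) (hA : A.IsSymm) :
    IsDeltaMatroid (Finset.univ : Finset V) {U : Finset V | Nondeg A U} := by
  refine ⟨⟨∅, ?_⟩, fun _ _ => Finset.subset_univ _, ?_⟩
  · simp [Nondeg]
  intro U hU W hW e he
  simp only [Set.mem_setOf_eq] at hU hW ⊢
  rw [nondeg_iff_mix] at hU hW
  simp only [nondeg_iff_mix]
  have two : ∀ a : ZMod 2, a ≠ 0 → a = 1 := by decide
  obtain ⟨x, hx⟩ := mix_surj A U hU (fun i => if i = e then 1 else 0)
  have hQ0 : ∀ i, mixQ A U (0 : V → ZMod 2) i = 0 := by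
    intro i
    simp [mixQ]
  by_cases hee : mixQ A U x e = 0
  · have hx0 : x ≠ 0 := by
      rintro rfl
      have := hx e
      simp [mixP] at this
    have : ∃ i, mixP A W x i ≠ 0 := by
      by_contra hcon
      push Not at hcon
      exact hx0 (hW x hcon)
    obtain ⟨i, hi⟩ := this
    have hWS : W = U ∆ (U ∆ W) := (symmDiff_symmDiff_cancel_left U W).symm
    rw [hWS, mix_symmDiff] at hi
    have hiS : i ∈ U ∆ W := by
      by_contra hn
      rw [if_neg hn, hx] at hi
      have : i ≠ e := fun h => hn (h ▸ he)
      simp [this] at hi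
    rw [if_pos hiS] at hi
    have hie : i ≠ e := by
      rintro rfl
      exact hi hee
    refine ⟨i, hiS, ?_⟩
    intro w hw
    simp only [mix_symmDiff] at hw
    have hqe : mixQ A U w e = 0 := by simpa using hw e
    have hqi : mixQ A U w i = 0 := by simpa using hw i
    have hp : ∀ j, j ≠ e → j ≠ i → mixP A U w j = 0 := by
      intro j h1 h2
      simpa [h1, h2] using hw j
    have iso := mix_isotropic A hA U x w
    rw [Finset.sum_eq_single i] at iso
    · rw [hqi, zero_mul, add_zero] at iso
      have hpi : mixP A U w i = 0 := (mul_eq_zero.mp iso).resolve_right hi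
      have hw' : ∀ j, j ≠ e → mixP A U w j = 0 := by
        intro j hj
        by_cases hji : j = i
        · rw [hji, hpi]
        · exact hp j hj hji
      rcases mix_eq A U hU e x w hx hw' with h | h
      · exact h
      · exact absurd (h ▸ hqi) hi
    · intro j _ hj
      by_cases hje : j = e
      · rw [hje, hee, hqe]
        simp
      · rw [hp j hje hj, hx j]
        simp [hje]
    · simp
  · refine ⟨e, he, ?_⟩
    intro w hw
    simp only [mix_symmDiff] at hw
    have hqe : mixQ A U w e = 0 := by simpa using hw e
    have hw' : ∀ j, j ≠ e → mixP A U w j = 0 := by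
      intro j hj
      simpa [hj] using hw j
    rcases mix_eq A U hU e x w hx hw' with h | h
    · exact h
    · exact absurd (h ▸ hqe) hee
end

section
/- Let V be a finite set, A a symmetric V×V matrix over the two-element field F₂, and T ⊆ V any subset. Then the twist N(A) * T = (V; {U Δ T : U ⊆ V, the principal submatrix A_U is invertible over F₂}) of the nondegeneracy set system of A is a delta-matroid. (In particular every binary delta-matroid is a delta-matroid.) -/
open scoped symmDiff

variable {α : Type*} [DecidableEq α]

/-- Kernel characterization of nondegeneracy. -/
theorem nondeg_iff_ker {V : Type*} [Fintype V] [DecidableEq V]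
    (A : Matrix V V (ZMod 2)) (U : Finset V) :
    Nondeg A U ↔ ∀ x : V → ZMod 2, (∀ i, i ∉ U → x i = 0) →
      (∀ i ∈ U, A.mulVec x i = 0) → x = 0 := by
  have key : ∀ x : V → ZMod 2, (∀ i, i ∉ U → x i = 0) → ∀ i : U,
      (principalSubmatrix A U).mulVec (fun j : U => x j) i = A.mulVec x i := by
    intro x hx i
    simp only [Matrix.mulVec, dotProduct, principalSubmatrix, Matrix.submatrix_apply]
    rw [Finset.sum_coe_sort U (fun j => A i j * x j)]
    apply Finset.sum_subset (Finset.subset_univ _)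
    intro j _ hj
    rw [hx j hj, mul_zero]
  unfold Nondeg
  rw [isUnit_iff_ne_zero, ne_eq, ← Matrix.exists_mulVec_eq_zero_iff]
  constructor
  · intro h x hx hAx
    by_contra hne
    apply h
    refine ⟨fun j : U => x j, ?_, ?_⟩
    · intro h0
      apply hne
      funext i
      by_cases hi : i ∈ U
      · exact congrFun h0 ⟨i, hi⟩
      · exact hx i hi
    · funext i
      rw [key x hx i]
      exact hAx i i.2
  · rintro h ⟨y, hy, hAy⟩
    apply hy
    set x : V → ZMod 2 := fun i => if hi : i ∈ U then y ⟨i, hi⟩ else 0 with hxdef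
    have hx : ∀ i, i ∉ U → x i = 0 := fun i hi => by simp [hxdef, hi]
    have hxy : (fun j : U => x j) = y := by
      funext j
      simp [hxdef]
    have h0 : x = 0 := by
      apply h x hx
      intro i hi
      have := key x hx ⟨i, hi⟩
      rw [hxy, hAy] at this
      exact this.symm
    rw [← hxy, h0]
    rfl

/-- Rows of `A` on `U`, of the identity off `U`. -/
def rowMix {V : Type*} [DecidableEq V] (A : Matrix V V (ZMod 2)) (U : Finset V) :
    Matrix V V (ZMod 2) :=
  Matrix.of fun i => if i ∈ U then A i else (1 : Matrix V V (ZMod 2)) i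

theorem rowMix_mulVec {V : Type*} [Fintype V] [DecidableEq V]
    (A : Matrix V V (ZMod 2)) (U : Finset V) (x : V → ZMod 2) (i : V) :
    (rowMix A U).mulVec x i = if i ∈ U then A.mulVec x i else x i := by
  by_cases hi : i ∈ U
  · simp [rowMix, Matrix.mulVec, hi]
  · have : (rowMix A U).mulVec x i = (1 : Matrix V V (ZMod 2)).mulVec x i := by
      simp [rowMix, Matrix.mulVec, hi]
    rw [this, Matrix.one_mulVec, if_neg hi]

theorem rowMix_symm {V : Type*} [Fintype V] [DecidableEq V]
    (A : Matrix V V (ZMod 2)) (hA : A.IsSymm) (U : Finset V) :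
    (rowMix A U).transpose * rowMix A Uᶜ = (rowMix A Uᶜ).transpose * rowMix A U := by
  ext j k
  rw [← sub_eq_zero]
  have h2 : ∀ a b : ZMod 2, a - b = a + b := by decide
  have h3 : ∀ a : ZMod 2, a + a = 0 := by decide
  rw [h2]
  simp only [Matrix.mul_apply, Matrix.transpose_apply]
  rw [← Finset.sum_add_distrib]
  have : ∀ i, rowMix A U i j * rowMix A Uᶜ i k + rowMix A Uᶜ i j * rowMix A U i k
      = A i j * (1 : Matrix V V (ZMod 2)) i k + (1 : Matrix V V (ZMod 2)) i j * A i k := by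
    intro i
    by_cases hi : i ∈ U
    · simp [rowMix, hi]
    · simp [rowMix, hi, add_comm]
  rw [Finset.sum_congr rfl (fun i _ => this i), Finset.sum_add_distrib]
  simp only [Matrix.one_apply, mul_ite, mul_one, mul_zero, ite_mul, one_mul, zero_mul,
    Finset.sum_ite_eq', Finset.mem_univ, if_true]
  rw [hA.apply j k, h3]

/-- Principal pivot. -/
theorem exists_pivot {V : Type*} [Fintype V] [DecidableEq V]
    (A : Matrix V V (ZMod 2)) (hA : A.IsSymm) (U : Finset V) (hU : Nondeg A U) :
    ∃ B : Matrix V V (ZMod 2), B.IsSymm ∧ ∀ W, Nondeg B W ↔ Nondeg A (U ∆ W) := by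
  have hP : IsUnit (rowMix A U).det := by
    rw [isUnit_iff_ne_zero, ne_eq, ← Matrix.exists_mulVec_eq_zero_iff]
    rintro ⟨x, hx, h⟩
    apply hx
    apply (nondeg_iff_ker A U).1 hU x
    · intro i hi
      have := congrFun h i
      rwa [rowMix_mulVec, if_neg hi] at this
    · intro i hi
      have := congrFun h i
      rwa [rowMix_mulVec, if_pos hi] at this
  set P := rowMix A U with hPdef
  set Q := rowMix A Uᶜ with hQdef
  have hPi : P * P⁻¹ = 1 := Matrix.mul_nonsing_inv _ hP
  have hiP : P⁻¹ * P = 1 := Matrix.nonsing_inv_mul _ hP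
  have hBP : ∀ x, (Q * P⁻¹).mulVec (P.mulVec x) = Q.mulVec x := by
    intro x
    rw [Matrix.mulVec_mulVec, Matrix.mul_assoc, hiP, Matrix.mul_one]
  refine ⟨Q * P⁻¹, ?_, ?_⟩
  · have hs : P.transpose * Q = Q.transpose * P := rowMix_symm A hA U
    have hT : (P⁻¹).transpose * P.transpose = 1 := by
      rw [← Matrix.transpose_mul, hPi, Matrix.transpose_one]
    unfold Matrix.IsSymm
    calc (Q * P⁻¹).transpose = (P⁻¹).transpose * Q.transpose * (P * P⁻¹) := by
          rw [hPi, Matrix.mul_one, Matrix.transpose_mul]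
      _ = (P⁻¹).transpose * (Q.transpose * P) * P⁻¹ := by simp only [Matrix.mul_assoc]
      _ = ((P⁻¹).transpose * P.transpose) * (Q * P⁻¹) := by
          rw [← hs]; simp only [Matrix.mul_assoc]
      _ = Q * P⁻¹ := by rw [hT, Matrix.one_mul]
  · intro W
    have hcond : ∀ x : V → ZMod 2,
        ((∀ i, i ∉ W → P.mulVec x i = 0) ∧ (∀ i ∈ W, Q.mulVec x i = 0)) ↔
        ((∀ i, i ∉ U ∆ W → x i = 0) ∧ (∀ i ∈ U ∆ W, A.mulVec x i = 0)) := by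
      intro x
      rw [← forall_and, ← forall_and]
      refine forall_congr' fun i => ?_
      rw [hPdef, hQdef, rowMix_mulVec, rowMix_mulVec, Finset.mem_symmDiff]
      by_cases h1 : i ∈ U <;> by_cases h2 : i ∈ W <;> simp [h1, h2]
    rw [nondeg_iff_ker, nondeg_iff_ker]
    constructor
    · intro h x hx hAx
      obtain ⟨h1, h2⟩ := (hcond x).2 ⟨hx, hAx⟩
      have h0 := h (P.mulVec x) h1 (by rw [hBP]; exact h2)
      have : P⁻¹.mulVec (P.mulVec x) = 0 := by rw [h0, Matrix.mulVec_zero]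
      rwa [Matrix.mulVec_mulVec, hiP, Matrix.one_mulVec] at this
    · intro h z hz hBz
      have hzx : z = P.mulVec (P⁻¹.mulVec z) := by
        rw [Matrix.mulVec_mulVec, hPi, Matrix.one_mulVec]
      generalize P⁻¹.mulVec z = x at hzx
      subst hzx
      rw [hBP] at hBz
      obtain ⟨h1, h2⟩ := (hcond x).1 ⟨hz, hBz⟩
      rw [h x h1 h2, Matrix.mulVec_zero]

/-- Exchange from the empty set. -/
theorem exchange_empty {V : Type*} [Fintype V] [DecidableEq V]
    (B : Matrix V V (ZMod 2)) (hB : B.IsSymm) (W : Finset V) (hW : Nondeg B W)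
    (e : V) (he : e ∈ W) : ∃ e' ∈ W, Nondeg B {e, e'} := by
  have h01 : ∀ a : ZMod 2, a ≠ 0 → a = 1 := by decide
  by_cases hee : B e e = 0
  · have hex : ∃ i ∈ W, B i e ≠ 0 := by
      by_contra! hcon
      have := (nondeg_iff_ker B W).1 hW (Pi.single e 1) (by
        intro i hi
        rw [Pi.single_eq_of_ne]
        rintro rfl
        exact hi he) (by
        intro i hi
        rw [Matrix.mulVec_single_one]
        exact hcon i hi)
      have h := congrFun this e
      simp at h
    obtain ⟨f, hf, hfe⟩ := hex
    have hne : e ≠ f := by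
      rintro rfl
      exact hfe hee
    refine ⟨f, hf, (nondeg_iff_ker _ _).2 ?_⟩
    intro x hx hBx
    have hsum : ∀ i, B.mulVec x i = B i e * x e + B i f * x f := by
      intro i
      rw [← Finset.sum_pair (f := fun j => B i j * x j) hne]
      symm
      apply Finset.sum_subset (Finset.subset_univ _)
      intro j _ hj
      rw [hx j hj, mul_zero]
    have h1 := hBx e (by simp)
    have h2 := hBx f (by simp)
    rw [hsum, hee, hB.apply f e, h01 _ hfe, zero_mul, zero_add, one_mul] at h1
    rw [hsum, h1, h01 _ hfe, mul_zero, add_zero, one_mul] at h2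
    funext i
    by_cases hi : i ∈ ({e, f} : Finset V)
    · rcases Finset.mem_insert.1 hi with rfl | hi
      · exact h2
      · rw [Finset.mem_singleton.1 hi]; exact h1
    · exact hx i hi
  · refine ⟨e, he, (nondeg_iff_ker _ _).2 ?_⟩
    intro x hx hBx
    have hsum : B.mulVec x e = B e e * x e := by
      apply Finset.sum_eq_single e
      · intro j _ hj
        rw [hx j (by simpa using hj), mul_zero]
      · simp
    have h1 := hBx e (by simp)
    rw [hsum, h01 _ hee, one_mul] at h1
    funext i
    by_cases hi : i = e
    · rw [hi]; exact h1
    · exact hx i (by simpa using hi)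

/-- Any twist of the nondegeneracy set system of a symmetric matrix over
`F₂` is a delta-matroid; in particular every binary delta-matroid is a delta-matroid. -/
theorem twist_nondegeneracy_isDeltaMatroid {V : Type*} [Fintype V] [DecidableEq V]
    (A : Matrix V V (ZMod 2)) (hA : A.IsSymm) (T : Finset V) :
    IsDeltaMatroid (Finset.univ : Finset V)
      (twist {U : Finset V | Nondeg A U} T) := by
  refine ⟨⟨∅ ∆ T, ∅, ?_, rfl⟩, fun φ _ => Finset.subset_univ φ, ?_⟩
  · rw [Set.mem_ofPred_eq, nondeg_iff_ker]
    intro x hx _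
    funext i
    exact hx i (by simp)
  · rintro _ ⟨U₁, h₁, rfl⟩ _ ⟨U₂, h₂, rfl⟩ e he
    have hs : (U₁ ∆ T) ∆ (U₂ ∆ T) = U₁ ∆ U₂ := by
      rw [symmDiff_symmDiff_symmDiff_comm, symmDiff_self, symmDiff_bot]
    rw [hs] at he ⊢
    obtain ⟨B, hB, hBW⟩ := exists_pivot A hA U₁ h₁
    have hW : Nondeg B (U₁ ∆ U₂) := by
      rw [hBW, symmDiff_symmDiff_cancel_left]
      exact h₂
    obtain ⟨e', he', hn⟩ := exchange_empty B hB _ hW e he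
    refine ⟨e', he', U₁ ∆ {e, e'}, (hBW _).1 hn, ?_⟩
    rw [symmDiff_right_comm]
end

section
/- Let D = (E; Φ) be a binary delta-matroid and e ∈ E. If e is not a coloop of D, then the deletion D ∖ e = (E∖{e}; {φ ∈ Φ : e ∉ φ}) is a binary delta-matroid; if e is not a loop of D, then the contraction D/e = (E∖{e}; {φ∖{e} : φ ∈ Φ, e ∈ φ}) is a binary delta-matroid. (Consequently the restriction of a binary delta-matroid to any subset of its ground set is a binary delta-matroid.) -/
open scoped symmDiff

variable {α : Type*} [DecidableEq α]

/-- Kernel form of nondegeneracy for matrices over a finite index type. -/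
def KerND {ι : Type*} [Fintype ι] (B : Matrix ι ι (ZMod 2)) (U : Set ι) : Prop :=
  ∀ x : ι → ZMod 2, (∀ i, i ∉ U → x i = 0) → (∀ i ∈ U, B.mulVec x i = 0) → x = 0

/-- Principal pivot transform over `F₂` in kernel form. -/
theorem pivot_fintype {ι : Type*} [Fintype ι] [DecidableEq ι] (B : Matrix ι ι (ZMod 2))
    (hB : B.IsSymm) (S : Set ι) (hS : KerND B S) :
    ∃ M : Matrix ι ι (ZMod 2), M.IsSymm ∧ ∀ U : Set ι, KerND M U ↔ KerND B (U ∆ S) := by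
  classical
  let D : Matrix ι ι (ZMod 2) := Matrix.diagonal (fun i => if i ∈ S then 1 else 0)
  let D' : Matrix ι ι (ZMod 2) := Matrix.diagonal (fun i => if i ∈ S then 0 else 1)
  let P := D * B + D'
  let Q := D + D' * B
  have hP : ∀ x i, P.mulVec x i = if i ∈ S then B.mulVec x i else x i := by
    intro x i
    simp only [P, D, D', Matrix.add_mulVec, ← Matrix.mulVec_mulVec, Pi.add_apply,
      Matrix.mulVec_diagonal]
    split_ifs <;> simp
  have hQ : ∀ x i, Q.mulVec x i = if i ∈ S then x i else B.mulVec x i := by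
    intro x i
    simp only [Q, D, D', Matrix.add_mulVec, ← Matrix.mulVec_mulVec, Pi.add_apply,
      Matrix.mulVec_diagonal]
    split_ifs <;> simp
  have hinj : ∀ x, P.mulVec x = 0 → x = 0 := by
    intro x hx
    apply hS
    · intro i hi
      have := congrFun hx i
      rw [hP, if_neg hi] at this
      exact this
    · intro i hi
      have := congrFun hx i
      rw [hP, if_pos hi] at this
      exact this
  have hdet : IsUnit P.det := by
    rw [isUnit_iff_ne_zero]
    intro h0
    obtain ⟨v, hv, hv'⟩ := Matrix.exists_mulVec_eq_zero_iff.mpr h0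
    exact hv (hinj v hv')
  have hMP : (Q * P⁻¹) * P = Q := by
    rw [Matrix.mul_assoc, Matrix.nonsing_inv_mul P hdet, Matrix.mul_one]
  refine ⟨Q * P⁻¹, ?_, ?_⟩
  · set M := Q * P⁻¹ with hM
    have hDD : D * D = D := by simp [D, Matrix.diagonal_mul_diagonal]
    have hDD' : D * D' = 0 := by
      simp only [D, D', Matrix.diagonal_mul_diagonal, ← Matrix.diagonal_zero]
      congr 1; funext i; split_ifs <;> simp
    have hD'D : D' * D = 0 := by
      simp only [D, D', Matrix.diagonal_mul_diagonal, ← Matrix.diagonal_zero]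
      congr 1; funext i; split_ifs <;> simp
    have hD'D' : D' * D' = D' := by simp [D', Matrix.diagonal_mul_diagonal]
    have hsum : D + D' = 1 := by
      simp only [D, D', Matrix.diagonal_add, ← Matrix.diagonal_one]
      congr 1; funext i; split_ifs <;> simp
    have hDt : D.transpose = D := Matrix.diagonal_transpose _
    have hDt' : D'.transpose = D' := Matrix.diagonal_transpose _
    have hBt : B.transpose = B := hB
    have h2 : ∀ X : Matrix ι ι (ZMod 2), X + X = 0 := by
      intro X; ext i j; exact CharTwo.add_self_eq_zero _
    have e1 : P.transpose * Q = B * D + D' * B := by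
      simp only [P, Q, Matrix.transpose_add, Matrix.transpose_mul, hDt, hDt', hBt]
      rw [Matrix.add_mul, Matrix.mul_add, Matrix.mul_add, Matrix.mul_assoc B D D, hDD,
        Matrix.mul_assoc B D, ← Matrix.mul_assoc D D' B, hDD', hD'D, ← Matrix.mul_assoc D' D' B,
        hD'D']
      simp
    have e3 : B * D + D' * B = D * B + B * D' := by
      have a : B * D + B * D' = B := by rw [← Matrix.mul_add, hsum, Matrix.mul_one]
      have b : D * B + D' * B = B := by rw [← Matrix.add_mul, hsum, Matrix.one_mul]
      have c : (B * D + D' * B) + (D * B + B * D') = 0 := by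
        calc _ = (B * D + B * D') + (D * B + D' * B) := by abel
          _ = 0 := by rw [a, b, h2]
      calc B * D + D' * B = (B * D + D' * B) + (D * B + B * D') + (D * B + B * D') := by
            rw [add_assoc, h2, add_zero]
        _ = _ := by rw [c, zero_add]
    have e2 : Q.transpose * P = D * B + B * D' := by
      have := congrArg Matrix.transpose e1
      simpa [Matrix.transpose_mul, Matrix.transpose_add, hDt, hDt', hBt] using this
    have e4 : P.transpose * M * P = P.transpose * M.transpose * P := by
      rw [Matrix.mul_assoc, hMP, ← Matrix.transpose_mul, hMP, e1, e2, e3]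
    have hu : IsUnit P := (Matrix.isUnit_iff_isUnit_det P).mpr hdet
    have hut : IsUnit P.transpose :=
      (Matrix.isUnit_iff_isUnit_det _).mpr (by rwa [Matrix.det_transpose])
    exact (hut.mul_left_cancel (hu.mul_right_cancel e4)).symm
  · intro U
    have hMx : ∀ x, (Q * P⁻¹).mulVec (P.mulVec x) = Q.mulVec x := by
      intro x; rw [Matrix.mulVec_mulVec, hMP]
    constructor
    · intro h x h1 h2
      apply hinj
      apply h
      · intro i hi
        rw [hP]
        split_ifs with hs
        · exact h2 i (Or.inr ⟨hs, hi⟩)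
        · exact h1 i (by rintro (⟨a, _⟩ | ⟨a, _⟩) <;> contradiction)
      · intro i hi
        rw [hMx, hQ]
        split_ifs with hs
        · exact h1 i (by rintro (⟨_, a⟩ | ⟨_, a⟩) <;> contradiction)
        · exact h2 i (Or.inl ⟨hi, hs⟩)
    · intro h x' h1 h2
      obtain ⟨x, rfl⟩ : ∃ x, x' = P.mulVec x :=
        ⟨P⁻¹.mulVec x', by rw [Matrix.mulVec_mulVec, Matrix.mul_nonsing_inv P hdet,
          Matrix.one_mulVec]⟩
      have : x = 0 := by
        apply h
        · intro i hi
          by_cases hs : i ∈ S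
          · have hU : i ∈ U := by
              by_contra hU; exact hi (Or.inr ⟨hs, hU⟩)
            have := h2 i hU
            rwa [hMx, hQ, if_pos hs] at this
          · have hU : i ∉ U := fun hU => hi (Or.inl ⟨hU, hs⟩)
            have := h1 i hU
            rwa [hP, if_neg hs] at this
        · rintro i (⟨hU, hs⟩ | ⟨hs, hU⟩)
          · have := h2 i hU
            rwa [hMx, hQ, if_neg hs] at this
          · have := h1 i hU
            rwa [hP, if_pos hs] at this
      rw [this, Matrix.mulVec_zero]

/-- Nondegeneracy in terms of kernels of the `E × E` block. -/
theorem nondeg_iff_kerND {α : Type*} [DecidableEq α] (A : Matrix α α (ZMod 2))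
    (E U : Finset α) (hU : U ⊆ E) :
    Nondeg A U ↔ KerND (principalSubmatrix A E) {i : E | (i : α) ∈ U} := by
  have hdet : Nondeg A U ↔ ∀ v : U → ZMod 2, (principalSubmatrix A U).mulVec v = 0 → v = 0 := by
    unfold Nondeg
    rw [isUnit_iff_ne_zero, ne_eq, ← Matrix.exists_mulVec_eq_zero_iff]
    push Not
    exact ⟨fun h v hv => by_contra fun hn => h v hn hv, fun h v hn hv => hn (h v hv)⟩
  have key : ∀ (f : α → ZMod 2), (∀ i, i ∉ U → f i = 0) → ∀ a : α,
      ∑ j : E, A a j * f j = ∑ j : U, A a j * f j := by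
    intro f hf a
    rw [Finset.sum_coe_sort E (fun j => A a j * f j), Finset.sum_coe_sort U (fun j => A a j * f j)]
    symm
    apply Finset.sum_subset hU
    intro j _ hj
    rw [hf j hj, mul_zero]
  rw [hdet]
  constructor
  · intro h x h1 h2
    let f : α → ZMod 2 := fun a => if ha : a ∈ E then x ⟨a, ha⟩ else 0
    have hfE : ∀ j : E, f j = x j := fun j => by simp [f]
    have hf : ∀ i, i ∉ U → f i = 0 := by
      intro i hi
      by_cases hE : i ∈ E
      · simp only [f, dif_pos hE]; exact h1 ⟨i, hE⟩ hi
      · simp only [f, dif_neg hE]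
    have h0 : (fun j : U => f j) = 0 := by
      apply h
      funext i
      have := h2 ⟨i, hU i.2⟩ i.2
      have k := key f hf i
      simp only [hfE] at k
      exact k.symm.trans this
    funext i
    by_cases hi : (i : α) ∈ U
    · rw [← hfE]; exact congrFun h0 ⟨i, hi⟩
    · exact h1 i hi
  · intro h v hv
    let f : α → ZMod 2 := fun a => if ha : a ∈ U then v ⟨a, ha⟩ else 0
    have hfU : ∀ j : U, f j = v j := fun j => by simp [f]
    have hf : ∀ i, i ∉ U → f i = 0 := by
      intro i hi
      simp only [f, dif_neg hi]
    have h0 : (fun j : E => f j) = 0 := by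
      apply h
      · intro i hi; exact hf i hi
      · intro i hi
        have := congrFun hv ⟨i, hi⟩
        have k := key f hf i
        simp only [hfU] at k
        exact k.trans this
    funext i
    rw [← hfU]; exact congrFun h0 ⟨i, hU i.2⟩

/-- Principal pivot transform for `Nondeg`. -/
theorem nondeg_pivot {α : Type*} [DecidableEq α] (A : Matrix α α (ZMod 2)) (hA : A.IsSymm)
    (E S : Finset α) (hSE : S ⊆ E) (hS : Nondeg A S) :
    ∃ A' : Matrix α α (ZMod 2), A'.IsSymm ∧
      ∀ U : Finset α, U ⊆ E → (Nondeg A' U ↔ Nondeg A (U ∆ S)) := by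
  obtain ⟨M, hM, hMU⟩ := pivot_fintype (principalSubmatrix A E) (hA.submatrix _) _
    ((nondeg_iff_kerND A E S hSE).mp hS)
  let A' : Matrix α α (ZMod 2) := Matrix.of fun a b =>
    if ha : a ∈ E then if hb : b ∈ E then M ⟨a, ha⟩ ⟨b, hb⟩ else 0 else 0
  have hA' : principalSubmatrix A' E = M := by
    ext i j
    simp [principalSubmatrix, A']
  refine ⟨A', ?_, ?_⟩
  · ext a b
    simp only [Matrix.transpose_apply, A', Matrix.of_apply]
    split_ifs
    · exact hM.apply _ _
    all_goals rfl
  · intro U hU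
    have hUS : U ∆ S ⊆ E := by
      intro a ha
      rcases Finset.mem_symmDiff.mp ha with h | h
      · exact hU h.1
      · exact hSE h.1
    rw [nondeg_iff_kerND A' E U hU, nondeg_iff_kerND A E _ hUS, hA', hMU]
    have : ({i : E | (i : α) ∈ U} ∆ {i : E | (i : α) ∈ S} : Set E) =
        {i : E | (i : α) ∈ U ∆ S} := by
      ext i
      simp [Set.mem_symmDiff, Finset.mem_symmDiff]
    rw [this]

/-- Any feasible set may be used as the twisting set. -/
theorem rebase {α : Type*} [DecidableEq α] (E : Finset α) (Φ : Set (Finset α))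
    (hD : IsBinaryDeltaMatroid E Φ) (T : Finset α) (hT : T ∈ Φ) :
    ∃ A : Matrix α α (ZMod 2), A.IsSymm ∧ T ⊆ E ∧
      ∀ ψ, ψ ∈ Φ ↔ ∃ U : Finset α, U ⊆ E ∧ Nondeg A U ∧ ψ = U ∆ T := by
  obtain ⟨A, T₀, hA, hT₀, rfl⟩ := hD
  obtain ⟨S, hS, hSn, rfl⟩ := hT
  have hsub : ∀ X Y : Finset α, X ⊆ E → Y ⊆ E → X ∆ Y ⊆ E := by
    intro X Y hX hY a ha
    rcases Finset.mem_symmDiff.mp ha with h | h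
    · exact hX h.1
    · exact hY h.1
  obtain ⟨A', hA', hU⟩ := nondeg_pivot A hA E S hS hSn
  refine ⟨A', hA', hsub _ _ hS hT₀, fun ψ => ⟨?_, ?_⟩⟩
  · rintro ⟨U, hUE, hUn, rfl⟩
    refine ⟨U ∆ S, hsub _ _ hUE hS, ?_, ?_⟩
    · rw [hU _ (hsub _ _ hUE hS), symmDiff_symmDiff_cancel_right]; exact hUn
    · rw [← symmDiff_assoc, symmDiff_symmDiff_cancel_right]
  · rintro ⟨U, hUE, hUn, rfl⟩
    exact ⟨U ∆ S, hsub _ _ hUE hS, (hU U hUE).mp hUn, by rw [symmDiff_assoc]⟩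

/-- Deletion of a non-coloop and contraction of a non-loop of a binary
delta-matroid are binary delta-matroids (hence so is the restriction to any subset). -/
theorem deletion_contraction_isBinaryDeltaMatroid {α : Type*} [DecidableEq α]
    (E : Finset α) (Φ : Set (Finset α)) (e : α)
    (hD : IsBinaryDeltaMatroid E Φ) (he : e ∈ E) :
    ((∃ φ ∈ Φ, e ∉ φ) → IsBinaryDeltaMatroid (E.erase e) (delSet Φ e)) ∧
    ((∃ φ ∈ Φ, e ∈ φ) → IsBinaryDeltaMatroid (E.erase e) (conSet Φ e)) := by
  constructor
  · rintro ⟨T, hT, heT⟩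
    obtain ⟨A, hA, hTE, hΦ⟩ := rebase E Φ hD T hT
    refine ⟨A, T, hA, fun a ha => Finset.mem_erase.mpr ⟨fun h => heT (h ▸ ha), hTE ha⟩, ?_⟩
    ext ψ
    constructor
    · rintro ⟨hψ, heψ⟩
      obtain ⟨U, hUE, hUn, rfl⟩ := (hΦ ψ).mp hψ
      refine ⟨U, fun a ha => Finset.mem_erase.mpr ⟨?_, hUE ha⟩, hUn, rfl⟩
      rintro rfl
      exact heψ (Finset.mem_symmDiff.mpr (Or.inl ⟨ha, heT⟩))
    · rintro ⟨U, hUE, hUn, rfl⟩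
      refine ⟨(hΦ _).mpr ⟨U, hUE.trans (Finset.erase_subset _ _), hUn, rfl⟩, ?_⟩
      intro h
      rcases Finset.mem_symmDiff.mp h with h | h
      · exact Finset.notMem_erase e E (hUE h.1)
      · exact heT h.1
  · rintro ⟨T, hT, heT⟩
    obtain ⟨A, hA, hTE, hΦ⟩ := rebase E Φ hD T hT
    have herase : ∀ U : Finset α, e ∉ U → (U ∆ T).erase e = U ∆ (T.erase e) := by
      intro U hU
      ext a
      by_cases hae : a = e
      · subst hae; simp [Finset.mem_symmDiff, hU]
      · simp [Finset.mem_symmDiff, hae]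
    refine ⟨A, T.erase e, hA, Finset.erase_subset_erase _ hTE, ?_⟩
    ext ψ
    constructor
    · rintro ⟨φ, hφ, heφ, rfl⟩
      obtain ⟨U, hUE, hUn, rfl⟩ := (hΦ φ).mp hφ
      have heU : e ∉ U := by
        intro h
        rcases Finset.mem_symmDiff.mp heφ with h' | h'
        · exact h'.2 heT
        · exact h'.2 h
      exact ⟨U, fun a ha => Finset.mem_erase.mpr ⟨fun h => heU (h ▸ ha), hUE ha⟩, hUn,
        herase U heU⟩
    · rintro ⟨U, hUE, hUn, rfl⟩
      have heU : e ∉ U := fun h => Finset.notMem_erase e E (hUE h)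
      exact ⟨U ∆ T, (hΦ _).mpr ⟨U, hUE.trans (Finset.erase_subset _ _), hUn, rfl⟩,
        Finset.mem_symmDiff.mpr (Or.inr ⟨heT, heU⟩), (herase U heU).symm⟩
end

section
/- Let D = (E; Φ) be a binary delta-matroid and a, b ∈ E two distinct elements. Then the handle slide D̃_{ab} = (E; Φ Δ {φ ∪ {a} : φ ⊆ E∖{a,b} and φ ∪ {b} ∈ Φ}) is a binary delta-matroid. -/
open scoped symmDiff

variable {α : Type*} [DecidableEq α]

namespace HS

/-- choice matrix -/
def ch {E : Finset α} (X Y : Matrix E E (ZMod 2)) (ψ : Finset α) : Matrix E E (ZMod 2) :=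
  Matrix.of fun i => if (i : α) ∈ ψ then Y i else X i

theorem ch_apply {E : Finset α} (X Y : Matrix E E (ZMod 2)) (ψ : Finset α) (i : E) :
    ch X Y ψ i = if (i : α) ∈ ψ then Y i else X i := rfl

theorem ch_twist {E : Finset α} (X Y : Matrix E E (ZMod 2)) (T ψ : Finset α) :
    ch (ch X Y T) (ch Y X T) ψ = ch X Y (ψ ∆ T) := by
  funext i
  by_cases h1 : (i : α) ∈ ψ <;> by_cases h2 : (i : α) ∈ T <;>
    simp [ch_apply, Finset.mem_symmDiff, h1, h2]

/-- Lagrangian condition -/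
def Lag {V : Type*} [Fintype V] (X Y : Matrix V V (ZMod 2)) : Prop :=
  ∀ j k, ∑ i, X i j * Y i k = ∑ i, Y i j * X i k

theorem lag_iff {V : Type*} [Fintype V] (X Y : Matrix V V (ZMod 2)) :
    Lag X Y ↔ X.transpose * Y = Y.transpose * X := by
  constructor
  · intro h
    ext j k
    simpa [Matrix.mul_apply] using h j k
  · intro h j k
    simpa [Matrix.mul_apply] using congrFun (congrFun h j) k

theorem z2 (x y : ZMod 2) : x = y ↔ x + y = 0 := by
  revert x y; decide

theorem lag_iff' {V : Type*} [Fintype V] (X Y : Matrix V V (ZMod 2)) :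
    Lag X Y ↔ ∀ j k, ∑ i, (X i j * Y i k + Y i j * X i k) = 0 := by
  unfold Lag
  simp only [z2 (∑ i, X i _ * Y i _), Finset.sum_add_distrib]

theorem lag_twist {E : Finset α} (X Y : Matrix E E (ZMod 2)) (T : Finset α) (h : Lag X Y) :
    Lag (ch X Y T) (ch Y X T) := by
  rw [lag_iff'] at *
  intro j k
  rw [← h j k]
  refine Finset.sum_congr rfl fun i _ => ?_
  by_cases h2 : (i : α) ∈ T <;> simp [ch_apply, h2, add_comm]

theorem det_one_ch {E : Finset α} (A : Matrix α α (ZMod 2)) (U : Finset α) (hU : U ⊆ E) :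
    (ch (1 : Matrix E E (ZMod 2)) (principalSubmatrix A E) U).det
      = (principalSubmatrix A U).det := by
  rw [Matrix.twoBlockTriangular_det _ (fun i : E => (i : α) ∈ U)]
  · have h2 : (Matrix.toSquareBlockProp (ch (1 : Matrix E E (ZMod 2)) (principalSubmatrix A E) U)
        (fun i => ¬ (i : α) ∈ U)) = 1 := by
      ext ⟨i, hi⟩ ⟨j, hj⟩
      simp [Matrix.toSquareBlockProp_def, ch_apply, hi, Matrix.one_apply]
    rw [h2, Matrix.det_one, mul_one]
    let e : {i : E // (i : α) ∈ U} ≃ U :=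
      ⟨fun i => ⟨i.1.1, i.2⟩, fun i => ⟨⟨i.1, hU i.2⟩, i.2⟩, fun _ => rfl, fun _ => rfl⟩
    rw [← Matrix.det_submatrix_equiv_self e]
    congr 1
    ext ⟨i, hi⟩ ⟨j, hj⟩
    simp [Matrix.toSquareBlockProp_def, ch_apply, hi, principalSubmatrix, e]
  · intro i hi j hj
    have : i ≠ j := by rintro rfl; exact hi hj
    simp [ch_apply, hi, this]

theorem ch_mul {E : Finset α} (X Y N : Matrix E E (ZMod 2)) (ψ : Finset α) :
    ch (X * N) (Y * N) ψ = ch X Y ψ * N := by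
  ext i j
  by_cases h : (i : α) ∈ ψ <;> simp [ch_apply, h, Matrix.mul_apply]

theorem symmDiff_sub {E S T : Finset α} (hS : S ⊆ E) (hT : T ⊆ E) : S ∆ T ⊆ E := by
  intro x hx
  rw [Finset.mem_symmDiff] at hx
  rcases hx with h | h
  · exact hS h.1
  · exact hT h.1

theorem rep_of {E : Finset α} {Φ : Set (Finset α)} (h : IsBinaryDeltaMatroid E Φ) :
    ∃ X Y : Matrix E E (ZMod 2), Lag X Y ∧ (∃ S ⊆ E, S ∈ Φ) ∧
      Φ = {ψ | ψ ⊆ E ∧ (ch X Y ψ).det ≠ 0} := by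
  obtain ⟨A, T, hA, hT, rfl⟩ := h
  refine ⟨ch 1 (principalSubmatrix A E) T, ch (principalSubmatrix A E) 1 T,
    lag_twist _ _ _ ?_, ⟨T, hT, ∅, by simp, by simp [Nondeg], (bot_symmDiff T).symm⟩, ?_⟩
  · rw [lag_iff]
    ext i j
    simp [principalSubmatrix, hA.apply]
  · ext ψ
    simp only [Set.mem_ofPred_eq, ch_twist, Nondeg, isUnit_iff_ne_zero]
    constructor
    · rintro ⟨U, hU, h, rfl⟩
      refine ⟨symmDiff_sub hU hT, ?_⟩
      rwa [symmDiff_symmDiff_cancel_right, det_one_ch A U hU]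
    · rintro ⟨hψ, h⟩
      refine ⟨ψ ∆ T, symmDiff_sub hψ hT, ?_, by rw [symmDiff_symmDiff_cancel_right]⟩
      rwa [det_one_ch A _ (symmDiff_sub hψ hT)] at h

theorem of_rep {E : Finset α} {Φ : Set (Finset α)} (X Y : Matrix E E (ZMod 2)) (hL : Lag X Y)
    (hne : ∃ S ⊆ E, S ∈ Φ) (hΦ : Φ = {ψ | ψ ⊆ E ∧ (ch X Y ψ).det ≠ 0}) :
    IsBinaryDeltaMatroid E Φ := by
  obtain ⟨S, hS, hSΦ⟩ := hne
  have hd : (ch X Y S).det ≠ 0 := by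
    rw [hΦ] at hSΦ; exact hSΦ.2
  have hL' := lag_twist X Y S hL
  set X' := ch X Y S with hX'
  set Y' := ch Y X S with hY'
  rw [lag_iff] at hL'
  have hu : IsUnit X'.det := isUnit_iff_ne_zero.2 hd
  have hut : IsUnit X'.transpose.det := by rwa [Matrix.det_transpose]
  have hsymm : (Y' * X'⁻¹).transpose = Y' * X'⁻¹ := by
    rw [Matrix.transpose_mul, Matrix.transpose_nonsing_inv]
    calc X'.transpose⁻¹ * Y'.transpose
        = X'.transpose⁻¹ * Y'.transpose * (X' * X'⁻¹) := by
          rw [Matrix.mul_nonsing_inv _ hu, Matrix.mul_one]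
      _ = X'.transpose⁻¹ * (Y'.transpose * X') * X'⁻¹ := by simp only [Matrix.mul_assoc]
      _ = X'.transpose⁻¹ * (X'.transpose * Y') * X'⁻¹ := by rw [hL']
      _ = Y' * X'⁻¹ := by rw [Matrix.nonsing_inv_mul_cancel_left _ _ hut]
  let A : Matrix α α (ZMod 2) := Matrix.of fun i j =>
    if h : i ∈ E ∧ j ∈ E then (Y' * X'⁻¹) ⟨i, h.1⟩ ⟨j, h.2⟩ else 0
  have hAE : principalSubmatrix A E = Y' * X'⁻¹ := by
    ext ⟨i, hi⟩ ⟨j, hj⟩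
    simp [principalSubmatrix, A, hi, hj]
  have key : ∀ U ⊆ E, (ch X Y (U ∆ S)).det = (principalSubmatrix A U).det * X'.det := by
    intro U hU
    rw [← det_one_ch A U hU, hAE, ← Matrix.det_mul, ← ch_mul, Matrix.one_mul,
      Matrix.nonsing_inv_mul_cancel_right _ _ hu, hX', hY', ch_twist]
  refine ⟨A, S, ?_, hS, ?_⟩
  · ext i j
    by_cases hi : i ∈ E <;> by_cases hj : j ∈ E <;> simp only [Matrix.transpose_apply, A, Matrix.of_apply, hi, hj, and_self, and_true, and_false, dite_true, dite_false]
    · exact congrFun (congrFun hsymm _) _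
  · rw [hΦ]
    ext ψ
    simp only [Set.mem_ofPred_eq, Nondeg, isUnit_iff_ne_zero]
    constructor
    · rintro ⟨hψ, h⟩
      refine ⟨ψ ∆ S, symmDiff_sub hψ hS, ?_, by rw [symmDiff_symmDiff_cancel_right]⟩
      have := key _ (symmDiff_sub hψ hS)
      rw [symmDiff_symmDiff_cancel_right] at this
      rw [this] at h
      exact left_ne_zero_of_mul h
    · rintro ⟨U, hU, h, rfl⟩
      refine ⟨symmDiff_sub hU hS, ?_⟩
      rw [key U hU]
      exact mul_ne_zero h hd

theorem alt_sum {V : Type*} [Fintype V] [DecidableEq V] (X Y : Matrix V V (ZMod 2))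
    (hL : Lag X Y) (B : (V → ZMod 2) →ₗ[ZMod 2] (V → ZMod 2) →ₗ[ZMod 2] ZMod 2)
    (hB : ∀ u, B u u = 0) : ∑ i, B (X i) (Y i) = 0 := by
  have hBs : ∀ u v, B u v = B v u := by
    intro u v
    have := hB (u + v)
    simp only [map_add, LinearMap.add_apply, hB, zero_add, add_zero] at this
    rw [z2]; rw [add_comm]; exact this
  have hexp : ∀ u v, B u v = ∑ j, ∑ k, u j * v k * B (Pi.single j 1) (Pi.single k 1) := by
    intro u v
    conv_lhs => rw [pi_eq_sum_univ' u, pi_eq_sum_univ' v]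
    simp only [map_sum, LinearMap.sum_apply, map_smul, LinearMap.smul_apply, smul_eq_mul]
    simp only [Finset.mul_sum]
    rw [Finset.sum_comm]
    refine Finset.sum_congr rfl fun j _ => Finset.sum_congr rfl fun k _ => ?_
    ring
  have : ∑ i, B (X i) (Y i) = ∑ p : V × V, (∑ i, X i p.1 * Y i p.2) *
      B (Pi.single p.1 1) (Pi.single p.2 1) := by
    simp_rw [hexp (X _) (Y _), Fintype.sum_prod_type, Finset.sum_mul]
    rw [Finset.sum_comm]
    refine Finset.sum_congr rfl fun j _ => ?_
    rw [Finset.sum_comm]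
  rw [this]
  refine Finset.sum_involution (fun p _ => p.swap) ?_ ?_ (by simp) (by simp)
  · rintro ⟨j, k⟩ _
    rw [← z2]
    simp only [Prod.swap]
    rw [hL j k, hBs]
    congr 1
    exact Finset.sum_congr rfl fun i _ => mul_comm _ _
  · rintro ⟨j, k⟩ _ h heq
    simp only [Prod.swap, Prod.mk.injEq] at heq
    obtain ⟨rfl, _⟩ := heq
    exact h (by rw [hB, mul_zero])

/-- bilinear form from det -/
def bil {V : Type*} [Fintype V] [DecidableEq V] (Z : Matrix V V (ZMod 2)) (a b : V) (hab : a ≠ b) :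
    (V → ZMod 2) →ₗ[ZMod 2] (V → ZMod 2) →ₗ[ZMod 2] ZMod 2 :=
  LinearMap.mk₂ _ (fun u v => ((Z.updateRow a u).updateRow b v).det)
    (by
      intro u u' v
      simp only [Matrix.updateRow_comm _ hab, Matrix.det_updateRow_add])
    (by
      intro c u v
      simp only [Matrix.updateRow_comm _ hab, Matrix.det_updateRow_smul, smul_eq_mul])
    (by
      intro u v v'
      simp only [Matrix.det_updateRow_add])
    (by
      intro c u v
      simp only [Matrix.det_updateRow_smul, smul_eq_mul])

theorem bil_apply {V : Type*} [Fintype V] [DecidableEq V] (Z : Matrix V V (ZMod 2)) (a b : V)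
    (hab : a ≠ b) (u v) : bil Z a b hab u v = ((Z.updateRow a u).updateRow b v).det := rfl

theorem bil_self {V : Type*} [Fintype V] [DecidableEq V] (Z : Matrix V V (ZMod 2)) (a b : V)
    (hab : a ≠ b) (u) : bil Z a b hab u u = 0 := by
  rw [bil_apply]
  refine Matrix.det_zero_of_row_eq hab ?_
  funext j
  simp [Matrix.updateRow_apply, hab]

theorem bil_symm {V : Type*} [Fintype V] [DecidableEq V] (Z : Matrix V V (ZMod 2)) (a b : V)
    (hab : a ≠ b) (u v) : bil Z a b hab u v = bil Z a b hab v u := by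
  have := bil_self Z a b hab (u + v)
  simp only [map_add, LinearMap.add_apply, bil_self, zero_add, add_zero] at this
  rw [z2, add_comm]; exact this

theorem bil_row {V : Type*} [Fintype V] [DecidableEq V] (Z : Matrix V V (ZMod 2)) (a b : V)
    (hab : a ≠ b) (u v) (i : V) (hia : i ≠ a) (hib : i ≠ b) (h : Z i = u ∨ Z i = v) :
    bil Z a b hab u v = 0 := by
  rw [bil_apply]
  rcases h with h | h
  · refine Matrix.det_zero_of_row_eq hia ?_
    funext j
    simp [Matrix.updateRow_apply, hab, hia, hib, h]
  · refine Matrix.det_zero_of_row_eq hib ?_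
    funext j
    simp [Matrix.updateRow_apply, hia, hib, h]

theorem bil_two {V : Type*} [Fintype V] [DecidableEq V] (X Y Z : Matrix V V (ZMod 2)) (a b : V)
    (hab : a ≠ b) (hL : Lag X Y) (hZ : ∀ i, Z i = X i ∨ Z i = Y i) :
    bil Z a b hab (X a) (Y a) + bil Z a b hab (X b) (Y b) = 0 := by
  rw [← alt_sum X Y hL (bil Z a b hab) (bil_self Z a b hab)]
  symm
  refine Finset.sum_eq_add a b hab ?_ (by simp) (by simp)
  intro i _ hi
  exact bil_row Z a b hab _ _ i hi.1 hi.2 (hZ i)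

/-- slid X -/
def slX {V : Type*} [DecidableEq V] (X : Matrix V V (ZMod 2)) (a b : V) : Matrix V V (ZMod 2) :=
  X.updateRow b (X b + X a)

theorem lag_slide {V : Type*} [Fintype V] [DecidableEq V] (X Y : Matrix V V (ZMod 2)) (a b : V)
    (hab : a ≠ b) (hL : Lag X Y) : Lag (slX X a b) (slX Y b a) := by
  rw [lag_iff'] at *
  intro j k
  have h := hL j k
  rw [← Finset.add_sum_erase _ _ (Finset.mem_univ a),
    ← Finset.add_sum_erase _ _ (show b ∈ Finset.univ.erase a by simp [hab.symm])] at h ⊢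
  rw [← h, ← add_assoc, ← add_assoc (X a j * Y a k + Y a j * X a k)]
  refine congrArg₂ (· + ·) ?_ ?_
  · simp only [slX, Matrix.updateRow_apply, hab, hab.symm, if_true, if_false, Pi.add_apply]
    generalize X a j = x1, X a k = x2, X b j = x3, X b k = x4, Y a j = y1, Y a k = y2, Y b j = y3, Y b k = y4
    have h2 : (2 : ZMod 2) = 0 := rfl
    linear_combination (x1 * y4 + y3 * x2) * h2
  · refine Finset.sum_congr rfl fun i hi => ?_
    simp only [Finset.mem_erase] at hi
    simp [slX, Matrix.updateRow_apply, hi.1, hi.2.1]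

theorem ch_bil {E : Finset α} (X Y X' Y' : Matrix E E (ZMod 2)) (ψ : Finset α) (a b : E)
    (hab : a ≠ b) (hX : ∀ i, i ≠ a → i ≠ b → X' i = X i) (hY : ∀ i, i ≠ a → i ≠ b → Y' i = Y i) :
    (ch X' Y' ψ).det = bil (ch X Y ψ) a b hab (if (a : α) ∈ ψ then Y' a else X' a)
      (if (b : α) ∈ ψ then Y' b else X' b) := by
  rw [bil_apply]
  congr 1
  funext i
  by_cases hb : i = b
  · subst hb; simp [ch_apply]
  by_cases ha : i = a
  · subst ha; simp [ch_apply, Matrix.updateRow_ne hb]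
  rw [Matrix.updateRow_ne hb, Matrix.updateRow_ne ha, ch_apply, ch_apply, hX i ha hb, hY i ha hb]

theorem bil_congr {V : Type*} [Fintype V] [DecidableEq V] (Z Z' : Matrix V V (ZMod 2)) (a b : V)
    (hab : a ≠ b) (h : ∀ i, i ≠ a → i ≠ b → Z i = Z' i) : bil Z a b hab = bil Z' a b hab := by
  refine LinearMap.ext fun u => LinearMap.ext fun v => ?_
  rw [bil_apply, bil_apply]
  congr 1
  funext i
  by_cases hb : i = b
  · subst hb; simp
  by_cases ha : i = a
  · subst ha; simp [Matrix.updateRow_ne hb]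
  rw [Matrix.updateRow_ne hb, Matrix.updateRow_ne ha, Matrix.updateRow_ne hb,
    Matrix.updateRow_ne ha, h i ha hb]

theorem slide_same {E : Finset α} (X Y : Matrix E E (ZMod 2)) (ψ : Finset α) (a b : E)
    (hab : a ≠ b) (h : ¬ ((a : α) ∈ ψ ∧ (b : α) ∉ ψ)) :
    (ch (slX X a b) (slX Y b a) ψ).det = (ch X Y ψ).det := by
  rw [ch_bil X Y (slX X a b) (slX Y b a) ψ a b hab
    (fun i ha hb => by simp [slX, Matrix.updateRow_ne hb])
    (fun i ha hb => by simp [slX, Matrix.updateRow_ne ha]),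
    ch_bil X Y X Y ψ a b hab (fun _ _ _ => rfl) (fun _ _ _ => rfl)]
  by_cases ha : (a : α) ∈ ψ <;> by_cases hb : (b : α) ∈ ψ
  · simp [ha, hb, slX, Matrix.updateRow_ne hab, Matrix.updateRow_ne hab.symm, bil_self]
  · exact absurd ⟨ha, hb⟩ h
  · simp [ha, hb, slX, Matrix.updateRow_ne hab, Matrix.updateRow_ne hab.symm]
  · simp [ha, hb, slX, Matrix.updateRow_ne hab, Matrix.updateRow_ne hab.symm, bil_self]

theorem slide_diff {E : Finset α} (X Y : Matrix E E (ZMod 2)) (hL : Lag X Y)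
    (φ : Finset α) (a b : E)
    (hab : a ≠ b) (ha : (a : α) ∉ φ) (hb : (b : α) ∉ φ) :
    (ch (slX X a b) (slX Y b a) (φ ∪ {(a : α)})).det =
      (ch X Y (φ ∪ {(a : α)})).det + (ch X Y (φ ∪ {(b : α)})).det := by
  have hab' : (a : α) ≠ b := fun h => hab (Subtype.ext h)
  rw [ch_bil X Y (slX X a b) (slX Y b a) _ a b hab
    (fun i ha hb => by simp [slX, Matrix.updateRow_ne hb])
    (fun i ha hb => by simp [slX, Matrix.updateRow_ne ha]),
    ch_bil X Y X Y (φ ∪ {(a : α)}) a b hab (fun _ _ _ => rfl) (fun _ _ _ => rfl),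
    ch_bil X Y X Y (φ ∪ {(b : α)}) a b hab (fun _ _ _ => rfl) (fun _ _ _ => rfl),
    bil_congr (ch X Y (φ ∪ {(b : α)})) (ch X Y (φ ∪ {(a : α)})) a b hab]
  · have h2 := bil_two X Y (ch X Y (φ ∪ {(a : α)})) a b hab hL
      (fun i => by rw [ch_apply]; split_ifs <;> simp)
    have hs := bil_symm (ch X Y (φ ∪ {(a : α)})) a b hab
    generalize bil (ch X Y (φ ∪ {(a : α)})) a b hab = B at *
    simp only [Finset.mem_union, Finset.mem_singleton, ha, hb, hab', hab'.symm, or_true, or_false,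
      if_true, if_false, slX, Matrix.updateRow_self, map_add, LinearMap.add_apply]
    rw [hs (Y a) (X a), hs (Y b) (X b), hs (Y b) (X a)]
    linear_combination h2
  · intro i hia hib
    have h1 : (i : α) ≠ a := fun h => hia (Subtype.ext h)
    have h2 : (i : α) ≠ b := fun h => hib (Subtype.ext h)
    simp [ch_apply, h1, h2]

theorem xor_aux (P Q : Prop) : (P ∧ ¬ Q ∨ Q ∧ ¬ P) ↔ ¬ (P ↔ Q) := by
  tauto

theorem mem_aux (P C K R : Prop) (h : P → K) :
    ¬ (P ↔ C ∧ K ∧ R) ↔ (¬ C ∧ P) ∨ (C ∧ K ∧ ¬ (P ↔ R)) := by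
  tauto

theorem slide_aux (C K K' D D' : Prop) (hC : C) (h : K → K') :
    ((¬ C ∧ (K ∧ D)) ∨ (C ∧ K ∧ ¬ (K ∧ D ↔ K' ∧ D'))) ↔ K ∧ ¬ (D ↔ D') := by
  tauto

end HS

/-- Moffatt–Mphako-Banda. The handle slide of a binary delta-matroid at
a pair of distinct elements `a, b` of its ground set is a binary delta-matroid. -/
theorem handleSlide_isBinaryDeltaMatroid {α : Type*} [DecidableEq α] (E : Finset α)
    (Φ : Set (Finset α)) (a b : α) (ha : a ∈ E) (hb : b ∈ E) (hab : a ≠ b)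
    (hD : IsBinaryDeltaMatroid E Φ) :
    IsBinaryDeltaMatroid E (slideSet E Φ a b) := by
  obtain ⟨X, Y, hL, ⟨S, hS, hSΦ⟩, hΦ⟩ := HS.rep_of hD
  have hab' : (⟨a, ha⟩ : E) ≠ ⟨b, hb⟩ := fun h => hab (congrArg Subtype.val h)
  have hE : ∀ ψ ∈ Φ, ψ ⊆ E := by
    intro ψ h; rw [hΦ] at h; exact h.1
  have hmem : ∀ ψ, ψ ∈ slideSet E Φ a b ↔
      (¬ (a ∈ ψ ∧ b ∉ ψ) ∧ ψ ∈ Φ) ∨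
      ((a ∈ ψ ∧ b ∉ ψ) ∧ ψ ⊆ E ∧ ¬ (ψ ∈ Φ ↔ (ψ.erase a ∪ {b}) ∈ Φ)) := by
    intro ψ
    have h0 : (∃ φ : Finset α, φ ⊆ E \ {a, b} ∧ φ ∪ {b} ∈ Φ ∧ ψ = φ ∪ {a}) ↔
        (a ∈ ψ ∧ b ∉ ψ) ∧ ψ ⊆ E ∧ (ψ.erase a ∪ {b}) ∈ Φ := by
      constructor
      · rintro ⟨φ, h1, h2, rfl⟩
        have haφ : a ∉ φ := fun h => by simpa using h1 h
        have hbφ : b ∉ φ := fun h => by simpa using h1 h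
        have : (φ ∪ {a}).erase a = φ := by
          ext x; simp; grind
        rw [this]
        refine ⟨⟨by simp, by simp [hbφ, hab.symm]⟩, ?_, h2⟩
        intro x hx
        have := @h1 x
        grind
      · rintro ⟨⟨h1, h2⟩, h3, h4⟩
        refine ⟨ψ.erase a, ?_, h4, ?_⟩
        · intro x hx
          have := @h3 x
          grind
        · ext x; grind
    have : ψ ∈ slideSet E Φ a b ↔ ¬ (ψ ∈ Φ ↔ 
        ∃ φ : Finset α, φ ⊆ E \ {a, b} ∧ φ ∪ {b} ∈ Φ ∧ ψ = φ ∪ {a}) := by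
      unfold slideSet
      rw [Set.mem_symmDiff, Set.mem_ofPred_eq]
      exact HS.xor_aux _ _
    rw [this, h0]
    exact HS.mem_aux _ _ _ _ (hE ψ)
  refine HS.of_rep (HS.slX X ⟨a, ha⟩ ⟨b, hb⟩) (HS.slX Y ⟨b, hb⟩ ⟨a, ha⟩)
    (HS.lag_slide X Y _ _ hab' hL) ?_ ?_
  · by_cases h : S ∈ slideSet E Φ a b
    · exact ⟨S, hS, h⟩
    · have h' := h
      rw [hmem] at h'
      have h3 : (S.erase a ∪ {b}) ∈ Φ := by tauto
      refine ⟨_, hE _ h3, ?_⟩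
      rw [hmem]
      left
      refine ⟨by simp, h3⟩
  · ext ψ
    rw [hmem, Set.mem_ofPred_eq]
    by_cases hc : a ∈ ψ ∧ b ∉ ψ
    · have h1 := HS.slide_diff X Y hL (ψ.erase a) ⟨a, ha⟩ ⟨b, hb⟩ hab' (by simp) (by simp [hc.2])
      have h2 : ψ.erase a ∪ {a} = ψ := by ext x; grind
      simp only [h2] at h1
      rw [h1]
      have h4 : ψ ⊆ E → ψ.erase a ∪ {b} ⊆ E := by
        intro h x hx
        have := @h x
        grind
      have h5 : ∀ x y : ZMod 2, x + y ≠ 0 ↔ ¬ (x ≠ 0 ↔ y ≠ 0) := by decide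
      rw [h5, hΦ]
      exact HS.slide_aux _ _ _ _ _ hc h4
    · rw [HS.slide_same X Y ψ _ _ hab' hc, hΦ]
      simp only [Set.mem_ofPred_eq]
      tauto
end

section
/- Let D = (E; Φ) be a binary delta-matroid and a, b ∈ E two distinct elements. Then the first Vassiliev move D'_{ab} = ((D * {b})̃_{ab}) * {b} is a binary delta-matroid. -/
open scoped symmDiff

variable {α : Type*} [DecidableEq α]

/-- Columns in `U` from `M`, the others from `N`. -/
def mixM {E : Finset α} (M N : Matrix E E (ZMod 2)) (U : Finset α) : Matrix E E (ZMod 2) :=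
  Matrix.of fun i j => if (j : α) ∈ U then M i j else N i j

/-- Representation of a set system by an isotropic pair of matrices. -/
def PairRep (E : Finset α) (Φ : Set (Finset α)) (M N : Matrix E E (ZMod 2)) : Prop :=
  (∀ i k, ∑ j, (M i j * N k j + N i j * M k j) = 0) ∧
    ∀ U, U ∈ Φ ↔ U ⊆ E ∧ (mixM M N U).det ≠ 0

theorem empty_symmD (T : Finset α) : (∅ : Finset α) ∆ T = T := by
  ext x
  simp [Finset.mem_symmDiff]

theorem mem_twist (Φ : Set (Finset α)) (T U : Finset α) : U ∈ twist Φ T ↔ U ∆ T ∈ Φ := by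
  constructor
  · rintro ⟨φ, h, rfl⟩
    simpa using h
  · intro h
    exact ⟨_, h, by simp⟩

theorem symmDiff_subset_iff {E T : Finset α} (hT : T ⊆ E) (U : Finset α) :
    U ∆ T ⊆ E ↔ U ⊆ E := by
  constructor
  · intro h x hx
    by_cases hxT : x ∈ T
    · exact hT hxT
    · exact h (by simp [Finset.mem_symmDiff, hx, hxT])
  · intro h x hx
    rcases Finset.mem_symmDiff.1 hx with h1 | h1
    · exact h h1.1
    · exact hT h1.1

theorem PairRep.twist {E : Finset α} {Φ : Set (Finset α)} {M N : Matrix E E (ZMod 2)}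
    (h : PairRep E Φ M N) {T : Finset α} (hT : T ⊆ E) :
    PairRep E (twist Φ T) (mixM N M T) (mixM M N T) := by
  refine ⟨fun i k => ?_, fun U => ?_⟩
  · rw [← h.1 i k]
    refine Finset.sum_congr rfl fun j _ => ?_
    simp only [mixM, Matrix.of_apply]
    split_ifs <;> ring
  · rw [mem_twist, h.2, symmDiff_subset_iff hT]
    have : mixM M N (U ∆ T) = mixM (mixM N M T) (mixM M N T) U := by
      ext i j
      simp only [mixM, Matrix.of_apply, Finset.mem_symmDiff]
      by_cases h1 : (j : α) ∈ U <;> by_cases h2 : (j : α) ∈ T <;> simp [h1, h2]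
    rw [this]

theorem det_mix_one {E : Finset α} (A : Matrix α α (ZMod 2)) {U : Finset α} (hU : U ⊆ E) :
    (mixM (E := E) (A.submatrix (fun i => (i : α)) (fun i => (i : α))) 1 U).det =
      (principalSubmatrix A U).det := by
  rw [Matrix.twoBlockTriangular_det' _ (fun j : E => (j : α) ∈ U)]
  · have h2 : (mixM (E := E) (A.submatrix (fun i => (i : α)) (fun i => (i : α))) 1 U).toSquareBlockProp
        (fun j : E => ¬ (j : α) ∈ U) = 1 := by
      ext i j
      have hj := j.2
      change (if (j.1 : α) ∈ U then A i.1 j.1 else (1 : Matrix E E (ZMod 2)) i.1 j.1) = _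
      rw [if_neg hj, Matrix.one_apply, Matrix.one_apply]
      by_cases hij : i = j
      · subst hij; simp
      · rw [if_neg hij, if_neg (fun e : i.1 = j.1 => hij (Subtype.ext e))]
    rw [h2, Matrix.det_one, mul_one]
    let e : U ≃ {j : E // (j : α) ∈ U} :=
      { toFun := fun u => ⟨⟨u, hU u.2⟩, u.2⟩
        invFun := fun j => ⟨j.1, j.2⟩
        left_inv := fun _ => rfl
        right_inv := fun _ => rfl }
    rw [← Matrix.det_submatrix_equiv_self e]
    congr 1
    ext i j
    simp [Matrix.toSquareBlockProp, mixM, principalSubmatrix, e]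
  · intro i hi j hj
    have : i ≠ j := by rintro rfl; exact hj hi
    simp [mixM, hj, Matrix.one_apply, this]

theorem PairRep.of_binary {E : Finset α} {Φ : Set (Finset α)} (h : IsBinaryDeltaMatroid E Φ) :
    Φ.Nonempty ∧ ∃ M N, PairRep E Φ M N := by
  obtain ⟨A, T, hA, hT, rfl⟩ := h
  refine ⟨⟨T, ∅, by simp, by simp [Nondeg], (empty_symmD T).symm⟩, ?_⟩
  have h0 : PairRep E {U | U ⊆ E ∧ Nondeg A U}
      (A.submatrix (fun i => (i : α)) (fun i => (i : α))) 1 := by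
    refine ⟨fun i k => ?_, fun U => ?_⟩
    · rw [Finset.sum_add_distrib]
      simp only [Matrix.one_apply, Matrix.submatrix_apply, mul_ite, ite_mul, mul_one, one_mul,
        mul_zero, zero_mul, Finset.sum_ite_eq, Finset.mem_univ, if_true]
      rw [hA.apply]
      exact CharTwo.add_self_eq_zero _
    · simp only [Set.mem_ofPred_eq]
      refine and_congr_right fun hU => ?_
      rw [det_mix_one A hU, Nondeg, isUnit_iff_ne_zero]
  have e : {ψ | ∃ U : Finset α, U ⊆ E ∧ Nondeg A U ∧ ψ = U ∆ T} =
      _root_.twist {U | U ⊆ E ∧ Nondeg A U} T := by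
    ext ψ
    simp [_root_.twist, and_assoc]
  rw [e]
  exact ⟨_, _, h0.twist hT⟩

theorem PairRep.mul_left {E : Finset α} {Φ : Set (Finset α)} {M N : Matrix E E (ZMod 2)}
    (h : PairRep E Φ M N) (P : Matrix E E (ZMod 2)) (hP : P.det ≠ 0) :
    PairRep E Φ (P * M) (P * N) := by
  refine ⟨fun i k => ?_, fun U => ?_⟩
  · have h1 : M * N.transpose + N * M.transpose = 0 := by
      ext i k
      simp only [Matrix.add_apply, Matrix.mul_apply, Matrix.transpose_apply, Matrix.zero_apply]
      rw [← Finset.sum_add_distrib]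
      exact h.1 i k
    have h2 : (P * M) * (P * N).transpose + (P * N) * (P * M).transpose = 0 := by
      have : (P * M) * (P * N).transpose + (P * N) * (P * M).transpose =
          P * (M * N.transpose + N * M.transpose) * P.transpose := by
        simp only [Matrix.transpose_mul]
        noncomm_ring
      rw [this, h1]; simp
    have h3 := congrFun (congrFun h2 i) k
    rw [Matrix.add_apply, Matrix.mul_apply, Matrix.mul_apply, ← Finset.sum_add_distrib] at h3
    exact h3
  · rw [h.2]
    have : mixM (P * M) (P * N) U = P * mixM M N U := by
      ext i j
      simp only [mixM, Matrix.of_apply, Matrix.mul_apply]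
      split_ifs <;> rfl
    rw [this, Matrix.det_mul]
    simp [hP]

theorem PairRep.to_binary {E : Finset α} {Φ : Set (Finset α)} {M N : Matrix E E (ZMod 2)}
    (h : PairRep E Φ M N) (hne : Φ.Nonempty) : IsBinaryDeltaMatroid E Φ := by
  obtain ⟨F, hF⟩ := hne
  have hFE := ((h.2 F).1 hF).1
  have h1 := h.twist hFE
  generalize mixM N M F = M1 at h1
  generalize mixM M N F = N1 at h1
  have h0 : N1.det ≠ 0 := by
    have := ((h1.2 ∅).1 ((mem_twist _ _ _).2 (by rwa [empty_symmD]))).2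
    have e : mixM M1 N1 ∅ = N1 := by ext i j; simp [mixM]
    rwa [e] at this
  have hu : IsUnit N1.det := isUnit_iff_ne_zero.2 h0
  have h2 := h1.mul_left N1⁻¹ (by
    intro h3
    have := congrArg Matrix.det (Matrix.nonsing_inv_mul N1 hu)
    simp [Matrix.det_mul, h3] at this)
  rw [Matrix.nonsing_inv_mul N1 hu] at h2
  generalize N1⁻¹ * M1 = B at h2
  let A : Matrix α α (ZMod 2) := Matrix.of fun x y =>
    if hx : x ∈ E then if hy : y ∈ E then B ⟨x, hx⟩ ⟨y, hy⟩ else 0 else 0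
  have hB : (A.submatrix (fun i : E => (i : α)) (fun i : E => (i : α))) = B := by
    ext i j
    simp [A]
  refine ⟨A, F, ?_, hFE, ?_⟩
  · have hs : ∀ i k, B i k = B k i := by
      intro i k
      have := h2.1 i k
      rw [Finset.sum_add_distrib] at this
      simp only [Matrix.one_apply, mul_ite, ite_mul, mul_one, one_mul,
        mul_zero, zero_mul, Finset.sum_ite_eq, Finset.mem_univ, if_true] at this
      exact CharTwo.add_eq_zero.1 this
    ext x y
    simp only [Matrix.transpose_apply, A, Matrix.of_apply]
    split_ifs <;> first | rfl | exact hs _ _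
  · ext ψ
    have key : ∀ U, U ∆ F ∈ Φ ↔ U ⊆ E ∧ Nondeg A U := by
      intro U
      rw [← mem_twist, h2.2]
      refine and_congr_right fun hU => ?_
      rw [Nondeg, ← det_mix_one A hU, hB, isUnit_iff_ne_zero]
    constructor
    · intro hψ
      have := (key (ψ ∆ F)).1 (by simpa using hψ)
      exact ⟨ψ ∆ F, this.1, this.2, by simp⟩
    · rintro ⟨U, h3, h4, rfl⟩
      exact (key U).2 ⟨h3, h4⟩

/-- `K` with column `a` replaced by `u` and column `b` by `v`. -/
def om {V : Type*} [Fintype V] [DecidableEq V] (K : Matrix V V (ZMod 2)) (a b : V)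
    (u v : V → ZMod 2) : ZMod 2 :=
  ((K.updateCol a u).updateCol b v).det

section om
variable {V : Type*} [Fintype V] [DecidableEq V] (K : Matrix V V (ZMod 2)) {a b : V} (hab : a ≠ b)

theorem om_add_right (u v w : V → ZMod 2) : om K a b u (v + w) = om K a b u v + om K a b u w := by
  simp [om, Matrix.det_updateCol_add]

theorem om_smul_right (c : ZMod 2) (u v : V → ZMod 2) :
    om K a b u (c • v) = c * om K a b u v := by
  simp [om, Matrix.det_updateCol_smul]

theorem om_self (hab : a ≠ b) (u : V → ZMod 2) : om K a b u u = 0 := by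
  refine Matrix.det_zero_of_column_eq hab fun i => ?_
  simp [Matrix.updateCol_apply, hab]

theorem om_add_left (hab : a ≠ b) (u v w : V → ZMod 2) :
    om K a b (u + v) w = om K a b u w + om K a b v w := by
  simp [om, Matrix.updateCol_comm _ hab, Matrix.det_updateCol_add]

theorem om_smul_left (hab : a ≠ b) (c : ZMod 2) (u v : V → ZMod 2) :
    om K a b (c • u) v = c * om K a b u v := by
  simp [om, Matrix.updateCol_comm _ hab, Matrix.det_updateCol_smul]

theorem om_swap (hab : a ≠ b) (u v : V → ZMod 2) : om K a b u v = om K a b v u := by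
  have h := om_self K hab (u + v)
  rw [om_add_left K hab, om_add_right, om_add_right, om_self K hab, om_self K hab] at h
  simp only [zero_add, add_zero] at h
  exact CharTwo.add_eq_zero.1 h

/-- `om` as a bilinear map. -/
def omL (hab : a ≠ b) : (V → ZMod 2) →ₗ[ZMod 2] (V → ZMod 2) →ₗ[ZMod 2] ZMod 2 :=
  LinearMap.mk₂ (ZMod 2) (om K a b) (om_add_left K hab) (om_smul_left K hab) (om_add_right K)
    (om_smul_right K)

theorem omL_expand (hab : a ≠ b) (u v : V → ZMod 2) :
    om K a b u v = ∑ k, ∑ l, u k * v l * om K a b (Pi.single k 1) (Pi.single l 1) := by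
  have hu : u = ∑ k, u k • (Pi.single k 1 : V → ZMod 2) := pi_eq_sum_univ' u
  have hv : v = ∑ k, v k • (Pi.single k 1 : V → ZMod 2) := pi_eq_sum_univ' v
  change omL K hab u v = ∑ k, ∑ l, u k * v l * omL K hab (Pi.single k 1) (Pi.single l 1)
  conv_lhs => rw [hu, hv]
  simp only [map_sum, map_smul, LinearMap.sum_apply, LinearMap.smul_apply, smul_eq_mul,
    Finset.mul_sum, mul_assoc]
  rw [Finset.sum_comm]
  refine Finset.sum_congr rfl fun k _ => Finset.sum_congr rfl fun l _ => ?_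
  ring

theorem sum_symm_alt (S O : V → V → ZMod 2) (hS : ∀ k l, S k l = S l k)
    (hO : ∀ k l, O k l = O l k) (hd : ∀ k, O k k = 0) : ∑ k, ∑ l, S k l * O k l = 0 := by
  rw [← Finset.sum_product']
  refine Finset.sum_involution (fun p _ => (p.2, p.1)) ?_ ?_ (fun _ _ => by simp) (fun _ _ => rfl)
  · rintro ⟨k, l⟩ _
    simp only
    rw [hS l k, hO l k]
    exact CharTwo.add_self_eq_zero _
  · rintro ⟨k, l⟩ _ h h2
    simp only [Prod.mk.injEq] at h2
    apply h
    simp only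
    rw [h2.1, hd, mul_zero]

theorem om_isotropic (hab : a ≠ b) (M N : Matrix V V (ZMod 2))
    (h : ∀ i k, ∑ j, (M i j * N k j + N i j * M k j) = 0)
    (hK : ∀ j, j ≠ a → j ≠ b → K.col j = M.col j ∨ K.col j = N.col j) :
    om K a b (M.col a) (N.col a) = om K a b (M.col b) (N.col b) := by
  have h1 : ∑ j, om K a b (M.col j) (N.col j) = 0 := by
    simp_rw [omL_expand K hab (M.col _) (N.col _)]
    rw [Finset.sum_comm]
    simp_rw [Finset.sum_comm (s := Finset.univ (α := V)) (t := Finset.univ (α := V))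
      (f := fun j l => _ * _ * om K a b (Pi.single _ 1) (Pi.single l 1)), ← Finset.sum_mul]
    refine sum_symm_alt (fun k l => ∑ j, M.col j k * N.col j l) _ ?_ ?_ ?_
    · intro k l
      have := h k l
      rw [Finset.sum_add_distrib] at this
      have := CharTwo.add_eq_zero.1 this
      simp only [Matrix.col_apply]
      rw [this]
      exact Finset.sum_congr rfl fun _ _ => mul_comm _ _
    · intro k l; exact om_swap K hab _ _
    · intro k; exact om_self K hab _
  have h2 : ∀ j, j ≠ a → j ≠ b → om K a b (M.col j) (N.col j) = 0 := by
    intro j ja jb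
    rcases hK j ja jb with h3 | h3
    · refine Matrix.det_zero_of_column_eq ja fun i => ?_
      have := congrFun h3 i
      simp only [Matrix.col_apply] at this
      simp [Matrix.updateCol_apply, hab, ja, jb, this]
    · refine Matrix.det_zero_of_column_eq jb fun i => ?_
      have := congrFun h3 i
      simp only [Matrix.col_apply] at this
      simp [Matrix.updateCol_apply, ja, jb, this]
  rw [← Finset.sum_subset (Finset.subset_univ {a, b})
    (fun j _ hj => h2 j (fun e => hj (by simp [e])) (fun e => hj (by simp [e]))),
    Finset.sum_pair hab] at h1
  exact CharTwo.add_eq_zero.1 h1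

end om

theorem det_mix_om {E : Finset α} (M N : Matrix E E (ZMod 2)) (a b : E)
    (U : Finset α) (K : Matrix E E (ZMod 2))
    (hK : ∀ j : E, j ≠ a → j ≠ b → K.col j = if (j : α) ∈ U then M.col j else N.col j) :
    (mixM M N U).det = om K a b (if (a : α) ∈ U then M.col a else N.col a)
      (if (b : α) ∈ U then M.col b else N.col b) := by
  unfold om
  congr 1
  ext i j
  simp only [mixM, Matrix.of_apply, Matrix.updateCol_apply]
  by_cases hb : j = b
  · subst hb; simp only [if_true]; split_ifs <;> rfl
  · by_cases ha : j = a
    · subst ha; simp only [if_true, hb, if_false]; split_ifs <;> rfl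
    · have := congrFun (hK j ha hb) i
      simp only [ha, hb, if_false]
      rw [Matrix.col_apply] at this
      rw [this]
      split_ifs <;> rfl

theorem slide_mem {E : Finset α} {Φ : Set (Finset α)} {a b : α} (ha : a ∈ E) (hb : b ∈ E)
    (hab : a ≠ b) (hΦ : ∀ U ∈ Φ, U ⊆ E) (U : Finset α) :
    (U ∈ slideSet E Φ a b ↔ if a ∈ U ∧ b ∉ U then
      Xor (U ∈ Φ) (U ∆ {a, b} ∈ Φ) else U ∈ Φ) := by
  have h : (∃ φ : Finset α, φ ⊆ E \ {a, b} ∧ φ ∪ {b} ∈ Φ ∧ U = φ ∪ {a}) ↔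
      (a ∈ U ∧ b ∉ U) ∧ U ∆ {a, b} ∈ Φ := by
    constructor
    · rintro ⟨φ, h1, h2, rfl⟩
      have haφ : a ∉ φ := fun h => by simpa using h1 h
      have hbφ : b ∉ φ := fun h => by simpa using h1 h
      refine ⟨⟨by simp, by simp [hbφ, hab.symm]⟩, ?_⟩
      convert h2 using 1
      ext x
      simp only [Finset.mem_symmDiff, Finset.mem_union, Finset.mem_insert, Finset.mem_singleton]
      by_cases hxa : x = a
      · subst hxa; simp [haφ, hab]
      · by_cases hxb : x = b
        · subst hxb; simp [hbφ, hxa]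
        · simp [hxa, hxb]
    · rintro ⟨⟨h1, h2⟩, h3⟩
      refine ⟨U.erase a, ?_, ?_, ?_⟩
      · intro x hx
        have hxa := Finset.ne_of_mem_erase hx
        have hxU := Finset.mem_of_mem_erase hx
        have hxb : x ≠ b := fun e => h2 (e ▸ hxU)
        have := hΦ _ h3 (show x ∈ U ∆ {a, b} by simp [Finset.mem_symmDiff, hxU, hxa, hxb])
        simp [this, hxa, hxb]
      · convert h3 using 1
        ext x
        simp only [Finset.mem_symmDiff, Finset.mem_union, Finset.mem_insert,
          Finset.mem_singleton, Finset.mem_erase]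
        by_cases hxa : x = a
        · subst hxa; simp [h1, hab]
        · by_cases hxb : x = b
          · subst hxb; simp [h2]
          · simp [hxa, hxb]
      · ext x
        simp only [Finset.mem_union, Finset.mem_singleton, Finset.mem_erase]
        by_cases hxa : x = a
        · subst hxa; simp [h1]
        · simp [hxa]
  rw [slideSet, Set.mem_symmDiff, Set.mem_ofPred_eq, h]
  split_ifs with hc
  · simp [hc, Xor]
  · simp [hc]

theorem PairRep.slide {E : Finset α} {Φ : Set (Finset α)} {M N : Matrix E E (ZMod 2)}
    (h : PairRep E Φ M N) {a b : α} (ha : a ∈ E) (hb : b ∈ E) (hab : a ≠ b) :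
    PairRep E (slideSet E Φ a b) (M.updateCol ⟨a, ha⟩ (M.col ⟨a, ha⟩ + M.col ⟨b, hb⟩))
      (N.updateCol ⟨b, hb⟩ (N.col ⟨b, hb⟩ + N.col ⟨a, ha⟩)) := by
  have hab' : (⟨a, ha⟩ : E) ≠ ⟨b, hb⟩ := fun e => hab (congrArg Subtype.val e)
  set a' : E := ⟨a, ha⟩ with ha'
  set b' : E := ⟨b, hb⟩ with hb'
  set M' := M.updateCol a' (M.col a' + M.col b') with hM'
  set N' := N.updateCol b' (N.col b' + N.col a') with hN'
  have Ma : M'.col a' = M.col a' + M.col b' := by ext i; simp [hM']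
  have Nb : N'.col b' = N.col b' + N.col a' := by ext i; simp [hN']
  have Mo : ∀ j, j ≠ a' → M'.col j = M.col j := by intro j hj; ext i; simp [hM', hj]
  have No : ∀ j, j ≠ b' → N'.col j = N.col j := by intro j hj; ext i; simp [hN', hj]
  refine ⟨fun i k => ?_, fun U => ?_⟩
  · have two : (2 : ZMod 2) = 0 := rfl
    have Mai := congrFun Ma
    have Nbi := congrFun Nb
    have Moi := fun j hj => congrFun (Mo j hj)
    have Noi := fun j hj => congrFun (No j hj)
    simp only [Matrix.col_apply, Pi.add_apply] at Mai Nbi Moi Noi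
    have hbm : b' ∈ Finset.univ.erase a' := by simp [hab'.symm]
    rw [← h.1 i k, ← Finset.add_sum_erase _ _ (Finset.mem_univ a'),
      ← Finset.add_sum_erase _ _ hbm, ← Finset.add_sum_erase _ _ (Finset.mem_univ a'),
      ← Finset.add_sum_erase _ _ hbm]
    have hr : ∑ j ∈ (Finset.univ.erase a').erase b', (M' i j * N' k j + N' i j * M' k j) =
        ∑ j ∈ (Finset.univ.erase a').erase b', (M i j * N k j + N i j * M k j) := by
      refine Finset.sum_congr rfl fun j hj => ?_
      simp only [Finset.mem_erase] at hj
      rw [Moi j hj.2.1, Moi j hj.2.1, Noi j hj.1, Noi j hj.1]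
    rw [hr, Mai, Mai, Nbi, Nbi, Moi b' hab'.symm, Moi b' hab'.symm, Noi a' hab', Noi a' hab']
    linear_combination (M i b' * N k a' + N i a' * M k b') * two
  · rw [slide_mem ha hb hab (fun U hU => ((h.2 U).1 hU).1), h.2, h.2]
    have hs : U ∆ {a, b} ⊆ E ↔ U ⊆ E := symmDiff_subset_iff (by
      intro x hx
      simp only [Finset.mem_insert, Finset.mem_singleton] at hx
      rcases hx with rfl | rfl <;> assumption) U
    rw [hs]
    set K := mixM M N U with hK
    have hKc : ∀ j : E, j ≠ a' → j ≠ b' → K.col j = if (j : α) ∈ U then M.col j else N.col j := by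
      intro j _ _
      ext i
      simp only [hK, mixM, Matrix.col_apply, Matrix.of_apply]
      split_ifs <;> rfl
    have e1 := det_mix_om M N a' b' U K hKc
    have e2 := det_mix_om M' N' a' b' U K (by
      intro j h1 h2
      rw [hKc j h1 h2, Mo j h1, No j h2])
    have e3 := det_mix_om M N a' b' (U ∆ {a, b}) K (by
      intro j h1 h2
      have h1' : (j : α) ≠ a := fun e => h1 (Subtype.ext e)
      have h2' : (j : α) ≠ b := fun e => h2 (Subtype.ext e)
      rw [hKc j h1 h2]
      simp [Finset.mem_symmDiff, h1', h2'])
    have iso := om_isotropic K hab' M N h.1 (by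
      intro j h1 h2
      rw [hKc j h1 h2]
      split_ifs <;> simp)
    rw [Ma, Nb, Mo b' hab'.symm, No a' hab'] at e2
    have va : (a' : α) = a := rfl
    have vb : (b' : α) = b := rfl
    simp only [va, vb] at e1 e2 e3
    by_cases h1 : a ∈ U <;> by_cases h2 : b ∈ U <;>
      simp only [h1, h2, Finset.mem_symmDiff, if_true, if_false, Finset.mem_insert,
        Finset.mem_singleton, true_or, or_true, not_true, not_false_iff, and_true, and_false,
        or_false, om_add_left K hab', om_add_right, om_self K hab', add_zero, zero_add] at e1 e2 e3 ⊢
    · rw [e1, e2]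
    · rw [e1, e2, e3, iso, om_swap K hab' (M.col b') (N.col a')]
      generalize om K a' b' (M.col a') (N.col b') = x
      generalize om K a' b' (M.col b') (N.col b') = y
      generalize om K a' b' (N.col a') (M.col b') = z
      by_cases hU : U ⊆ E
      · simp only [hU, true_and, Xor]
        revert x y z
        decide
      · simp [hU, Xor]
    · rw [e1, e2]
    · rw [e1, e2]

theorem slide_nonempty {E : Finset α} {Φ : Set (Finset α)} {a b : α} (ha : a ∈ E) (hb : b ∈ E)
    (hab : a ≠ b) (hΦ : ∀ U ∈ Φ, U ⊆ E) (h : Φ.Nonempty) : (slideSet E Φ a b).Nonempty := by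
  obtain ⟨U, hU⟩ := h
  by_cases h1 : U ∈ slideSet E Φ a b
  · exact ⟨U, h1⟩
  · rw [slide_mem ha hb hab hΦ] at h1
    split_ifs at h1 with hc
    · refine ⟨U ∆ {a, b}, ?_⟩
      rw [slide_mem ha hb hab hΦ, if_neg (by simp [Finset.mem_symmDiff, hc])]
      by_contra h2
      exact h1 (Or.inl ⟨hU, h2⟩)
    · exact absurd hU h1

theorem firstMove_isBinaryDeltaMatroid {α : Type*} [DecidableEq α] (E : Finset α)
    (Φ : Set (Finset α)) (a b : α) (ha : a ∈ E) (hb : b ∈ E) (hab : a ≠ b)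
    (hD : IsBinaryDeltaMatroid E Φ) :
    IsBinaryDeltaMatroid E (firstMove E Φ a b) := by
  obtain ⟨⟨F, hF⟩, M, N, h⟩ := PairRep.of_binary hD
  have hbE : ({b} : Finset α) ⊆ E := by simpa using hb
  have h1 := h.twist hbE
  have h2 := h1.slide ha hb hab
  have h3 := h2.twist hbE
  obtain ⟨G, hG⟩ := slide_nonempty ha hb hab (fun U hU => ((h1.2 U).1 hU).1)
    ⟨F ∆ {b}, (mem_twist _ _ _).2 (by simpa using hF)⟩
  exact h3.to_binary ⟨G ∆ {b}, (mem_twist _ _ _).2 (by simpa using hG)⟩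
end

section
/- For any set system D = (E; Φ) and any two distinct elements a, b ∈ E, the first Vassiliev move is symmetric in a and b: D'_{ab} = D'_{ba}. -/
open scoped symmDiff

variable {α : Type*} [DecidableEq α]

theorem mem_twist_iff {α : Type*} [DecidableEq α] (Φ : Set (Finset α)) (T ψ : Finset α) :
    ψ ∈ twist Φ T ↔ ψ ∆ T ∈ Φ := by
  constructor
  · rintro ⟨φ, h, rfl⟩
    simpa [symmDiff_assoc] using h
  · intro h
    exact ⟨_, h, by simp [symmDiff_assoc]⟩

theorem firstMove_eq {α : Type*} [DecidableEq α] (E : Finset α)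
    (Φ : Set (Finset α)) (a b : α) (hab : a ≠ b) :
    firstMove E Φ a b = Φ ∆ {ψ | ∃ φ : Finset α, φ ⊆ E \ {a, b} ∧ φ ∈ Φ ∧ ψ = φ ∪ {a, b}} := by
  have key : ∀ ψ : Finset α,
      (∃ φ : Finset α, φ ⊆ E \ {a, b} ∧ (φ ∪ {b}) ∆ {b} ∈ Φ ∧ ψ ∆ {b} = φ ∪ {a}) ↔
      (∃ φ : Finset α, φ ⊆ E \ {a, b} ∧ φ ∈ Φ ∧ ψ = φ ∪ {a, b}) := by
    intro ψ
    refine exists_congr fun φ => and_congr_right fun hφ => ?_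
    have hb : b ∉ φ := fun h => by simpa using hφ h
    have h1 : (φ ∪ {b}) ∆ {b} = φ := by
      ext x
      simp only [Finset.mem_symmDiff, Finset.mem_union, Finset.mem_singleton]
      grind
    have h2 : (φ ∪ {a}) ∆ {b} = φ ∪ {a, b} := by
      ext x
      simp only [Finset.mem_symmDiff, Finset.mem_union, Finset.mem_singleton, Finset.mem_insert]
      grind
    rw [h1, ← h2]
    refine and_congr_right fun _ => ⟨fun h => ?_, fun h => ?_⟩
    · rw [← h]; simp [symmDiff_assoc]
    · rw [h]; simp [symmDiff_assoc]
  ext ψ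
  have h0 : (ψ ∆ {b}) ∆ {b} = ψ := by simp [symmDiff_assoc]
  simp only [firstMove, mem_twist_iff, slideSet, Set.mem_symmDiff, Set.mem_setOf_eq, key, h0]

/-- The first Vassiliev move is symmetric in `a` and `b`:
`D\'_{ab} = D\'_{ba}`. -/
theorem firstMove_symm {α : Type*} [DecidableEq α] (E : Finset α)
    (Φ : Set (Finset α)) (a b : α) (hne : Φ.Nonempty) (hsub : ∀ φ ∈ Φ, φ ⊆ E)
    (ha : a ∈ E) (hb : b ∈ E) (hab : a ≠ b) :
    firstMove E Φ a b = firstMove E Φ b a := by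
  rw [firstMove_eq E Φ a b hab, firstMove_eq E Φ b a hab.symm, Finset.pair_comm b a]
end

section
/- For any set system D = (E; Φ) and any two distinct elements a, b ∈ E, the first and the second Vassiliev moves commute: (D̃_{ab})'_{ab} = (D'_{ab})̃_{ab}. -/
open scoped symmDiff

variable {α : Type*} [DecidableEq α]

theorem mem_slideSet_iff {α : Type*} [DecidableEq α] (E : Finset α)
    (Φ : Set (Finset α)) (a b : α) (ha : a ∈ E) (hab : a ≠ b) (ψ : Finset α) :
    ψ ∈ slideSet E Φ a b ↔
      Xor (ψ ∈ Φ) (a ∈ ψ ∧ b ∉ ψ ∧ ψ ⊆ E ∧ ψ ∆ {a, b} ∈ Φ) := by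
  have key : (∃ φ : Finset α, φ ⊆ E \ {a, b} ∧ φ ∪ {b} ∈ Φ ∧ ψ = φ ∪ {a}) ↔
      (a ∈ ψ ∧ b ∉ ψ ∧ ψ ⊆ E ∧ ψ ∆ {a, b} ∈ Φ) := by
    constructor
    · rintro ⟨φ, h1, h2, rfl⟩
      have hb' : b ∉ φ := fun h => by simpa using h1 h
      have ha' : a ∉ φ := fun h => by simpa using h1 h
      have e : (φ ∪ {a}) ∆ {a, b} = φ ∪ {b} := by
        ext x
        simp only [Finset.mem_symmDiff, Finset.mem_union, Finset.mem_insert,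
          Finset.mem_singleton]
        grind
      refine ⟨by simp, by simp [hb', hab.symm], ?_, e ▸ h2⟩
      intro x hx
      rcases Finset.mem_union.1 hx with h | h
      · exact (Finset.mem_sdiff.1 (h1 h)).1
      · rw [Finset.mem_singleton.1 h]; exact ha
    · rintro ⟨h1, h2, h3, h4⟩
      refine ⟨ψ.erase a, ?_, ?_, ?_⟩
      · intro x hx
        have := @h3 x
        grind
      · have e : ψ ∆ {a, b} = ψ.erase a ∪ {b} := by
          ext x
          simp only [Finset.mem_symmDiff, Finset.mem_union, Finset.mem_insert,
            Finset.mem_singleton, Finset.mem_erase]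
          grind
        exact e ▸ h4
      · ext x
        grind
  rw [← key]
  simp only [slideSet, Set.mem_symmDiff, Set.mem_setOf_eq, Xor]

theorem mem_firstMove_iff {α : Type*} [DecidableEq α] (E : Finset α)
    (Φ : Set (Finset α)) (a b : α) (ha : a ∈ E) (hb : b ∈ E) (hab : a ≠ b) (ψ : Finset α) :
    ψ ∈ firstMove E Φ a b ↔
      Xor (ψ ∈ Φ) (a ∈ ψ ∧ b ∈ ψ ∧ ψ ⊆ E ∧ ψ ∆ {a, b} ∈ Φ) := by
  have e1 : (ψ ∆ {b}) ∆ {b} = ψ := by simp [symmDiff_assoc]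
  have e2 : ((ψ ∆ {b}) ∆ {a, b}) ∆ {b} = ψ ∆ {a, b} := by
    rw [symmDiff_right_comm, e1]
  have e3 : a ∈ ψ ∆ {b} ↔ a ∈ ψ := by simp [Finset.mem_symmDiff, hab]
  have e4 : b ∉ ψ ∆ {b} ↔ b ∈ ψ := by simp [Finset.mem_symmDiff]
  have e5 : ψ ∆ {b} ⊆ E ↔ ψ ⊆ E := by
    simp only [Finset.subset_iff, Finset.mem_symmDiff, Finset.mem_singleton]
    grind
  rw [firstMove, mem_twist_iff, mem_slideSet_iff E _ a b ha hab, mem_twist_iff, mem_twist_iff,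
    e1, e2, e3, e4, e5]

/-- The first and the second Vassiliev moves commute:
`(D~_{ab})\'_{ab} = (D\'_{ab})~_{ab}`. -/
theorem firstMove_slide_comm {α : Type*} [DecidableEq α] (E : Finset α)
    (Φ : Set (Finset α)) (a b : α) (hne : Φ.Nonempty) (hsub : ∀ φ ∈ Φ, φ ⊆ E)
    (ha : a ∈ E) (hb : b ∈ E) (hab : a ≠ b) :
    firstMove E (slideSet E Φ a b) a b = slideSet E (firstMove E Φ a b) a b := by
  ext ψ
  have e1 : a ∈ ψ ∆ {a, b} ↔ a ∉ ψ := by simp [Finset.mem_symmDiff]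
  rw [mem_firstMove_iff E _ a b ha hb hab, mem_slideSet_iff E _ a b ha hab,
    mem_slideSet_iff E _ a b ha hab, mem_slideSet_iff E _ a b ha hab,
    mem_firstMove_iff E _ a b ha hb hab, mem_firstMove_iff E _ a b ha hb hab, e1]
  by_cases h1 : a ∈ ψ <;> by_cases h2 : b ∈ ψ <;> simp [h1, h2, Xor]
end

section
/- The set system D = ({1,2,3}; {∅, {1,2}, {1,3}, {2,3}, {1,2,3}}) is a delta-matroid, but its handle slide D̃_{12} = ({1,2,3}; {∅, {1,2}, {2,3}, {1,2,3}}) is not a delta-matroid (the Symmetric Exchange Axiom fails). Hence the handle slide does not preserve the class of delta-matroids in general. -/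
open scoped symmDiff

variable {α : Type*} [DecidableEq α]

/-- The set system `D = ({1,2,3}; {∅, {1,2}, {1,3}, {2,3}, {1,2,3}})`
is a delta-matroid, its handle slide `D~_{12}` is `({1,2,3}; {∅, {1,2}, {2,3}, {1,2,3}})`,
and the latter is not a delta-matroid: handle slides do not preserve delta-matroids. -/
theorem handleSlide_not_deltaMatroid :
    IsDeltaMatroid ({1, 2, 3} : Finset ℕ)
      ({∅, {1, 2}, {1, 3}, {2, 3}, {1, 2, 3}} : Set (Finset ℕ)) ∧
    slideSet ({1, 2, 3} : Finset ℕ)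
        ({∅, {1, 2}, {1, 3}, {2, 3}, {1, 2, 3}} : Set (Finset ℕ)) 1 2
      = ({∅, {1, 2}, {2, 3}, {1, 2, 3}} : Set (Finset ℕ)) ∧
    ¬ IsDeltaMatroid ({1, 2, 3} : Finset ℕ)
      ({∅, {1, 2}, {2, 3}, {1, 2, 3}} : Set (Finset ℕ)) := by
  have hΦ : ({∅, {1, 2}, {1, 3}, {2, 3}, {1, 2, 3}} : Set (Finset ℕ))
      = (({∅, {1, 2}, {1, 3}, {2, 3}, {1, 2, 3}} : Finset (Finset ℕ)) : Set (Finset ℕ)) := by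
    simp
  have hΨ : ({∅, {1, 2}, {2, 3}, {1, 2, 3}} : Set (Finset ℕ))
      = (({∅, {1, 2}, {2, 3}, {1, 2, 3}} : Finset (Finset ℕ)) : Set (Finset ℕ)) := by
    simp
  rw [hΦ, hΨ]
  refine ⟨⟨⟨∅, by simp⟩, ?_, ?_⟩, ?_, ?_⟩
  · simp only [Finset.mem_coe]
    decide
  · simp only [Finset.mem_coe]
    decide
  · have h : {ψ | ∃ φ : Finset ℕ, φ ⊆ ({1, 2, 3} : Finset ℕ) \ {1, 2} ∧
        φ ∪ {2} ∈ (({∅, {1, 2}, {1, 3}, {2, 3}, {1, 2, 3}} : Finset (Finset ℕ)) :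
          Set (Finset ℕ)) ∧ ψ = φ ∪ {1}}
        = (({{1, 3}} : Finset (Finset ℕ)) : Set (Finset ℕ)) := by
      ext ψ
      simp only [Set.mem_setOf_eq, Finset.mem_coe, Finset.mem_singleton]
      constructor
      · rintro ⟨φ, h1, h2, rfl⟩
        have key : ∀ φ ∈ (({1, 2, 3} : Finset ℕ) \ {1, 2}).powerset,
            φ ∪ {2} ∈ ({∅, {1, 2}, {1, 3}, {2, 3}, {1, 2, 3}} : Finset (Finset ℕ)) →
              φ ∪ {1} = {1, 3} := by decide
        exact key φ (Finset.mem_powerset.2 h1) h2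
      · rintro rfl
        exact ⟨{3}, by decide, by decide, by decide⟩
    rw [slideSet, h, ← Finset.coe_symmDiff]
    congr 1
  · rintro ⟨-, -, h⟩
    simp only [Finset.mem_coe] at h
    have h' := h {1, 2, 3} (by decide) ∅ (by decide) 2 (by decide)
    revert h'
    decide
end
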